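/- arXiv:1810.09681 — 2 statements merged into one kernel-verified Lean document; each statement's English description precedes it below -/
import Mathlib

section
/- For all p ∈ [0.1689, 0.5] and all integers n ≥ 500000, Δ_n(p) ≤ ℰ₁(p)/σ + 0.05532/σ², where σ = √(npq), ℰ₁(p) = (2 − p)/(3√(2π)), and Δ_n(p) = sup_{x ∈ ℝ} |F_{n,p}(x) − Φ((x − np)/√(npq))|. -/
/-- The standard normal distribution function Φ. -/
noncomputable def Phi (x : ℝ) : ℝ :=
  (Real.sqrt (2 * Real.pi))⁻¹ * ∫ t in Set.Iio x, Real.exp (-t ^ 2 / 2)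

/-- The left-continuous binomial distribution function
`F_{n,p}(x) = Σ_{0 ≤ i < x} C(n,i) p^i q^{n−i}`. -/
noncomputable def binomCDF (n : ℕ) (p x : ℝ) : ℝ :=
  ∑ i ∈ Finset.range (n + 1),
    if (i : ℝ) < x then (n.choose i : ℝ) * p ^ i * (1 - p) ^ (n - i) else 0

/-- `Δ_n(p) = sup_x |F_{n,p}(x) − Φ((x − np)/√(npq))|`. -/
noncomputable def Delta (n : ℕ) (p : ℝ) : ℝ :=
  ⨆ x : ℝ, |binomCDF n p x - Phi ((x - n * p) / Real.sqrt (n * p * (1 - p)))|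


open MeasureTheory Set

lemma integral_dirichletKernel (m : ℕ) :
    IntegrableOn (fun t : ℝ => Real.sin ((m + 1 / 2) * t) / (2 * Real.sin (t / 2)))
      (Ioc 0 Real.pi) ∧
    ∫ t in Ioc 0 Real.pi, Real.sin ((m + 1 / 2) * t) / (2 * Real.sin (t / 2)) = Real.pi / 2 := by
  have hpos : ∀ t ∈ Ioc 0 Real.pi, 0 < Real.sin (t / 2) := fun t ht =>
    Real.sin_pos_of_pos_of_lt_pi (by linarith [ht.1]) (by linarith [ht.1, ht.2])
  induction m with
  | zero =>
    have h : EqOn (fun t : ℝ => Real.sin (((0 : ℕ) + 1 / 2) * t) / (2 * Real.sin (t / 2)))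
        (fun _ => 1 / 2) (Ioc 0 Real.pi) := by
      intro t ht
      have := hpos t ht
      have h2 : ((0 : ℕ) + 1 / 2 : ℝ) * t = t / 2 := by push_cast; ring
      simp only [h2]
      field_simp
    refine ⟨(integrableOn_congr_fun h measurableSet_Ioc).2 (by simp), ?_⟩
    rw [setIntegral_congr_fun measurableSet_Ioc h]
    simp [Real.pi_pos.le]
    ring
  | succ m ih =>
    have h : EqOn (fun t : ℝ => Real.sin (((m + 1 : ℕ) + 1 / 2) * t) / (2 * Real.sin (t / 2)))
        (fun t => Real.sin ((m + 1 / 2) * t) / (2 * Real.sin (t / 2)) + Real.cos ((m + 1) * t))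
        (Ioc 0 Real.pi) := by
      intro t ht
      have := hpos t ht
      have e1 : (((m + 1 : ℕ) : ℝ) + 1 / 2) * t = (m + 1) * t + t / 2 := by push_cast; ring
      have e2 : ((m : ℝ) + 1 / 2) * t = (m + 1) * t - t / 2 := by ring
      simp only [e1, e2, Real.sin_add, Real.sin_sub]
      field_simp
      ring
    have hc : IntegrableOn (fun t : ℝ => Real.cos ((m + 1) * t)) (Ioc 0 Real.pi) :=
      (Continuous.integrableOn_Icc (by fun_prop)).mono_set Ioc_subset_Icc_self
    refine ⟨(integrableOn_congr_fun h measurableSet_Ioc).2 (ih.1.add hc), ?_⟩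
    rw [setIntegral_congr_fun measurableSet_Ioc h, integral_add ih.1 hc, ih.2,
      ← intervalIntegral.integral_of_le Real.pi_pos.le]
    have hm : (m + 1 : ℝ) ≠ 0 := by positivity
    rw [intervalIntegral.integral_comp_mul_left _ hm]
    have := Real.sin_nat_mul_pi (m + 1)
    push_cast at this
    simp [this]

lemma integral_dirichletKernel_int (m : ℤ) :
    IntegrableOn (fun t : ℝ => Real.sin ((m + 1 / 2) * t) / (2 * Real.sin (t / 2)))
      (Ioc 0 Real.pi) ∧
    ∫ t in Ioc 0 Real.pi, Real.sin ((m + 1 / 2) * t) / (2 * Real.sin (t / 2)) =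
      if 0 ≤ m then Real.pi / 2 else -(Real.pi / 2) := by
  rcases le_or_gt 0 m with hm | hm
  · obtain ⟨k, rfl⟩ := Int.eq_ofNat_of_zero_le hm
    simpa using integral_dirichletKernel k
  · obtain ⟨k, hk⟩ := Int.eq_ofNat_of_zero_le (show 0 ≤ -m - 1 by omega)
    obtain rfl : m = -(k : ℤ) - 1 := by omega
    have h : (fun t : ℝ => Real.sin (((-(k : ℤ) - 1 : ℤ) + 1 / 2) * t) / (2 * Real.sin (t / 2)))
        = fun t => -(Real.sin ((k + 1 / 2) * t) / (2 * Real.sin (t / 2))) := by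
      funext t
      have : (((-(k : ℤ) - 1 : ℤ) : ℝ) + 1 / 2) * t = -((k + 1 / 2) * t) := by push_cast; ring
      rw [this, Real.sin_neg, neg_div]
    have := integral_dirichletKernel k
    rw [h]
    refine ⟨this.1.neg, ?_⟩
    rw [integral_neg, this.2, if_neg (by omega)]

/-- The characteristic function of a centred Bernoulli variable, at `-t`. -/
noncomputable def bernoulliChar (p t : ℝ) : ℂ :=
  (1 - p) * Complex.exp (((p * t : ℝ) : ℂ) * Complex.I) +
    p * Complex.exp (((-((1 - p) * t) : ℝ) : ℂ) * Complex.I)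

lemma sum_binomial_mul_sin (n : ℕ) (p s t : ℝ) :
    ∑ i ∈ Finset.range (n + 1),
        ((n.choose i : ℝ) * p ^ i * (1 - p) ^ (n - i)) * Real.sin ((s - i) * t) =
      (Complex.exp ((((s - n * p) * t : ℝ) : ℂ) * Complex.I) * bernoulliChar p t ^ n).im := by
  rw [bernoulliChar, add_comm ((1 - p : ℂ) * _), add_pow, Finset.mul_sum, Complex.im_sum]
  refine Finset.sum_congr rfl fun i hi => ?_
  have hi' : i ≤ n := by simpa [Nat.lt_succ_iff] using hi
  have : Complex.exp ((((s - n * p) * t : ℝ) : ℂ) * Complex.I) *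
      ((p * Complex.exp (((-((1 - p) * t) : ℝ) : ℂ) * Complex.I)) ^ i *
        ((1 - p) * Complex.exp (((p * t : ℝ) : ℂ) * Complex.I)) ^ (n - i) * (n.choose i : ℂ)) =
      (((n.choose i : ℝ) * p ^ i * (1 - p) ^ (n - i) : ℝ) : ℂ) *
        Complex.exp ((((s - i) * t : ℝ) : ℂ) * Complex.I) := by
    rw [mul_pow, mul_pow, ← Complex.exp_nat_mul, ← Complex.exp_nat_mul]
    have e : Complex.exp ((((s - i) * t : ℝ) : ℂ) * Complex.I) =
        Complex.exp ((((s - n * p) * t : ℝ) : ℂ) * Complex.I) *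
        (Complex.exp ((i : ℂ) * (((-((1 - p) * t) : ℝ) : ℂ) * Complex.I)) *
        Complex.exp (((n - i : ℕ) : ℂ) * (((p * t : ℝ) : ℂ) * Complex.I))) := by
      rw [← Complex.exp_add, ← Complex.exp_add]
      congr 1
      push_cast [Nat.cast_sub hi']
      ring
    rw [e]
    push_cast
    ring
  rw [this, Complex.im_ofReal_mul, Complex.exp_ofReal_mul_I_im]

lemma binomCDF_eq_integral (n : ℕ) (p x : ℝ) :
    let y : ℝ := (⌈x⌉ : ℝ) - 1 / 2 - n * p
    let f : ℝ → ℝ := fun t => (Complex.exp (((y * t : ℝ) : ℂ) * Complex.I) *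
      bernoulliChar p t ^ n).im / (2 * Real.sin (t / 2))
    IntegrableOn f (Ioc 0 Real.pi) ∧
      binomCDF n p x = 1 / 2 + Real.pi⁻¹ * ∫ t in Ioc 0 Real.pi, f t := by
  intro y f
  have hf : f = fun t => ∑ i ∈ Finset.range (n + 1),
      ((n.choose i : ℝ) * p ^ i * (1 - p) ^ (n - i)) *
        (Real.sin (((⌈x⌉ - 1 - i : ℤ) + 1 / 2) * t) / (2 * Real.sin (t / 2))) := by
    funext t
    simp only [f, y]
    rw [← sum_binomial_mul_sin n p, Finset.sum_div]
    refine Finset.sum_congr rfl fun i _ => ?_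
    rw [mul_div_assoc]
    congr 4
    push_cast
    ring
  have hi : ∀ i ∈ Finset.range (n + 1), IntegrableOn (fun t =>
      ((n.choose i : ℝ) * p ^ i * (1 - p) ^ (n - i)) *
        (Real.sin (((⌈x⌉ - 1 - i : ℤ) + 1 / 2) * t) / (2 * Real.sin (t / 2)))) (Ioc 0 Real.pi) :=
    fun i _ => (integral_dirichletKernel_int _).1.const_mul _
  have hone : ∑ i ∈ Finset.range (n + 1), (n.choose i : ℝ) * p ^ i * (1 - p) ^ (n - i) = 1 := by
    have := (add_pow p (1 - p) n).symm
    rw [add_sub_cancel, one_pow] at this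
    conv_rhs => rw [← this]
    refine Finset.sum_congr rfl fun i _ => ?_
    generalize (1 - p) ^ (n - i) = z
    ring
  refine ⟨?_, ?_⟩
  · rw [hf]
    exact integrable_finsetSum _ hi
  · rw [hf, integral_finsetSum _ hi, binomCDF, Finset.mul_sum]
    refine Eq.trans ?_ (congrArg (· + _)
      (show (1 / 2 : ℝ) * ∑ i ∈ Finset.range (n + 1),
        (n.choose i : ℝ) * p ^ i * (1 - p) ^ (n - i) = 1 / 2 by rw [hone, mul_one]))
    rw [Finset.mul_sum, ← Finset.sum_add_distrib]
    refine Finset.sum_congr rfl fun i _ => ?_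
    rw [integral_const_mul]
    have h := (integral_dirichletKernel_int (⌈x⌉ - 1 - i)).2
    rw [h]
    have hiff : (i : ℝ) < x ↔ 0 ≤ ⌈x⌉ - 1 - (i : ℤ) := by
      rw [← Int.cast_natCast, ← Int.lt_ceil]
      omega
    have := Real.pi_pos
    by_cases hx : (i : ℝ) < x
    · rw [if_pos hx, if_pos (hiff.1 hx)]
      field_simp
      ring
    · rw [if_neg hx, if_neg (fun h => hx (hiff.2 h))]
      field_simp
      ring

lemma Phi_hasDerivAt (x : ℝ) :
    HasDerivAt Phi ((Real.sqrt (2 * Real.pi))⁻¹ * Real.exp (-x ^ 2 / 2)) x := by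
  have hint : Integrable fun t : ℝ => Real.exp (-t ^ 2 / 2) := by
    convert integrable_exp_neg_mul_sq (b := 1 / 2) (by norm_num) using 2 with t
    ring_nf
  have h : Phi = fun x => (Real.sqrt (2 * Real.pi))⁻¹ *
      ((∫ t in Iic 0, Real.exp (-t ^ 2 / 2)) + ∫ t in (0 : ℝ)..x, Real.exp (-t ^ 2 / 2)) := by
    funext x
    rw [Phi, ← integral_Iic_eq_integral_Iio,
      ← intervalIntegral.integral_Iic_sub_Iic hint.integrableOn hint.integrableOn]
    ring
  rw [h]
  refine HasDerivAt.const_mul _ (HasDerivAt.const_add _ ?_)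
  exact (Continuous.integral_hasStrictDerivAt (by fun_prop) 0 x).hasDerivAt

lemma Phi_zero : Phi 0 = 1 / 2 := by
  have h := integral_gaussian_Ioi (1 / 2)
  rw [Phi, ← integral_Iic_eq_integral_Iio, show (0 : ℝ) = -0 by simp,
    ← integral_comp_neg_Ioi (f := fun t : ℝ => Real.exp (-t ^ 2 / 2))]
  have e : (fun t : ℝ => Real.exp (-(-t) ^ 2 / 2)) = fun t => Real.exp (-(1 / 2) * t ^ 2) := by
    funext t; ring_nf
  rw [e, h, show Real.pi / (1 / 2) = 2 * Real.pi by ring]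
  have : Real.sqrt (2 * Real.pi) ≠ 0 := by positivity
  field_simp

lemma abs_Phi_sub_Phi_le (a b : ℝ) :
    |Phi a - Phi b| ≤ (Real.sqrt (2 * Real.pi))⁻¹ * |a - b| := by
  have := Convex.norm_image_sub_le_of_norm_hasDerivWithin_le (f := Phi)
    (C := (Real.sqrt (2 * Real.pi))⁻¹) (s := univ) (x := b) (y := a)
    (fun x _ => (Phi_hasDerivAt x).hasDerivWithinAt) (fun x _ => ?_) convex_univ trivial trivial
  · simpa using this
  · rw [Real.norm_of_nonneg (by positivity)]
    refine mul_le_of_le_one_right (by positivity) (Real.exp_le_one_iff.2 ?_)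
    nlinarith [sq_nonneg x]

lemma integral_exp_neg_mul_sq_mul_cos {V : ℝ} (hV : 0 < V) (y : ℝ) :
    ∫ t in Ioi (0 : ℝ), Real.exp (-V * t ^ 2 / 2) * Real.cos (y * t) =
      Real.pi * ((Real.sqrt (2 * Real.pi))⁻¹ * Real.exp (-(y / Real.sqrt V) ^ 2 / 2) /
        Real.sqrt V) := by
  have hb : 0 < ((V / 2 : ℝ) : ℂ).re := by simpa using hV
  have h := fourierIntegral_gaussian hb y
  have e1 : ∀ x : ℝ, Complex.exp (Complex.I * y * x) * Complex.exp (-(V / 2 : ℝ) * x ^ 2) =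
      (Real.exp (-V * x ^ 2 / 2) : ℂ) * Complex.exp ((y * x : ℝ) * Complex.I) := by
    intro x
    rw [mul_comm]
    push_cast
    congr 2 <;> ring
  have hint : Integrable fun x : ℝ => Complex.exp (Complex.I * y * x) *
      Complex.exp (-(V / 2 : ℝ) * x ^ 2) := by
    have := integrable_cexp_quadratic hb (Complex.I * y) 0
    refine this.congr (Filter.Eventually.of_forall fun x => ?_)
    simp only [← Complex.exp_add]
    ring_nf
  have h2 := congrArg Complex.re h
  have h3 := integral_re hint
  simp only [RCLike.re_to_complex] at h3
  rw [← h3] at h2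
  simp only [e1, Complex.re_ofReal_mul, Complex.exp_ofReal_mul_I_re] at h2
  have h4 : ∫ x : ℝ, Real.exp (-V * x ^ 2 / 2) * Real.cos (y * x) =
      2 * ∫ t in Ioi (0 : ℝ), Real.exp (-V * t ^ 2 / 2) * Real.cos (y * t) := by
    rw [← integral_comp_abs (f := fun t => Real.exp (-V * t ^ 2 / 2) * Real.cos (y * t))]
    congr 1
    funext x
    rw [sq_abs]
    rcases abs_choice x with hx | hx <;> simp [hx]
  rw [h4] at h2
  have e2 : ((Real.pi : ℂ) / (V / 2 : ℝ)) ^ (1 / 2 : ℂ) *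
      Complex.exp (-(y : ℂ) ^ 2 / (4 * (V / 2 : ℝ))) =
      ((Real.sqrt (Real.pi / (V / 2)) * Real.exp (-y ^ 2 / (4 * (V / 2))) : ℝ) : ℂ) := by
    rw [Real.sqrt_eq_rpow]
    push_cast [Complex.ofReal_cpow (show 0 ≤ Real.pi / (V / 2) by positivity)]
    norm_num
  rw [e2, Complex.ofReal_re] at h2
  have e3 : -y ^ 2 / (4 * (V / 2)) = -(y / Real.sqrt V) ^ 2 / 2 := by
    rw [div_pow, Real.sq_sqrt hV.le]
    field_simp
    ring
  have e4 : Real.sqrt (Real.pi / (V / 2)) =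
      2 * (Real.pi * (Real.sqrt (2 * Real.pi))⁻¹ / Real.sqrt V) := by
    rw [show Real.pi / (V / 2) = (2 * Real.pi) / V by field_simp,
      Real.sqrt_div (by positivity)]
    have h0 : 0 < Real.sqrt (2 * Real.pi) := by positivity
    have : 0 < Real.sqrt V := by positivity
    field_simp
    rw [Real.sq_sqrt (by positivity)]
  rw [e3, e4] at h2
  refine mul_left_cancel₀ two_ne_zero (h2.trans ?_)
  ring

lemma Phi_div_sqrt_eq_integral {V : ℝ} (hV : 0 < V) (y : ℝ) :
    IntegrableOn (fun t => Real.exp (-V * t ^ 2 / 2) * Real.sin (y * t) / t) (Ioi (0 : ℝ)) ∧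
      Phi (y / Real.sqrt V) = 1 / 2 +
        Real.pi⁻¹ * ∫ t in Ioi (0 : ℝ), Real.exp (-V * t ^ 2 / 2) * Real.sin (y * t) / t := by
  have hg : IntegrableOn (fun t : ℝ => Real.exp (-V * t ^ 2 / 2)) (Ioi 0) := by
    have : Integrable fun t : ℝ => Real.exp (-V * t ^ 2 / 2) := by
      convert integrable_exp_neg_mul_sq (b := V / 2) (by positivity) using 2 with t
      ring_nf
    exact this.integrableOn
  have hmeas : ∀ y : ℝ, AEStronglyMeasurable
      (fun t => Real.exp (-V * t ^ 2 / 2) * Real.sin (y * t) / t) (volume.restrict (Ioi 0)) :=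
    fun y => Measurable.aestronglyMeasurable (by fun_prop)
  have hint : ∀ y : ℝ, IntegrableOn
      (fun t => Real.exp (-V * t ^ 2 / 2) * Real.sin (y * t) / t) (Ioi (0 : ℝ)) := by
    intro y
    refine (hg.const_mul |y|).mono' (hmeas y) ?_
    refine (ae_restrict_mem measurableSet_Ioi).mono fun t ht => ?_
    have ht : 0 < t := ht
    rw [norm_div, norm_mul, Real.norm_of_nonneg (Real.exp_pos _).le, Real.norm_of_nonneg ht.le,
      div_le_iff₀ ht]
    have : |Real.sin (y * t)| ≤ |y| * t := by
      rw [← abs_of_pos ht, ← abs_mul, abs_of_pos ht]; exact Real.abs_sin_le_abs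
    calc _ ≤ Real.exp (-V * t ^ 2 / 2) * (|y| * t) := by gcongr; exact this
      _ = _ := by ring
  have hder : ∀ y : ℝ, HasDerivAt
      (fun y => ∫ t in Ioi (0 : ℝ), Real.exp (-V * t ^ 2 / 2) * Real.sin (y * t) / t)
      (∫ t in Ioi (0 : ℝ), Real.exp (-V * t ^ 2 / 2) * Real.cos (y * t)) y := by
    intro y
    refine (hasDerivAt_integral_of_dominated_loc_of_deriv_le (s := univ) Filter.univ_mem
      (Filter.Eventually.of_forall hmeas) (hint y)
      (F' := fun y t => Real.exp (-V * t ^ 2 / 2) * Real.cos (y * t))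
      (Continuous.aestronglyMeasurable (by fun_prop)) ?_ hg ?_).2
    · refine Filter.Eventually.of_forall fun t x _ => ?_
      rw [norm_mul, Real.norm_of_nonneg (Real.exp_pos _).le]
      exact mul_le_of_le_one_right (Real.exp_pos _).le (Real.abs_cos_le_one _)
    · refine (ae_restrict_mem measurableSet_Ioi).mono fun t ht x _ => ?_
      have ht : t ≠ 0 := ne_of_gt ht
      have h1 : HasDerivAt (fun x : ℝ => x * t) t x := by
        simpa using (hasDerivAt_id x).mul_const t
      refine (((h1.sin).const_mul (Real.exp (-V * t ^ 2 / 2))).div_const t).congr_deriv ?_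
      field_simp
  refine ⟨hint y, ?_⟩
  have hd : ∀ y, HasDerivAt (fun y => Phi (y / Real.sqrt V) - Real.pi⁻¹ *
      ∫ t in Ioi (0 : ℝ), Real.exp (-V * t ^ 2 / 2) * Real.sin (y * t) / t) 0 y := by
    intro y
    have h1 := (Phi_hasDerivAt (y / Real.sqrt V)).comp y ((hasDerivAt_id y).div_const (Real.sqrt V))
    have h2 := h1.sub ((hder y).const_mul Real.pi⁻¹)
    rw [integral_exp_neg_mul_sq_mul_cos hV] at h2
    refine h2.congr_deriv ?_
    rw [inv_mul_cancel_left₀ Real.pi_ne_zero]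
    ring
  have := is_const_of_deriv_eq_zero (fun y => (hd y).differentiableAt) (fun y => (hd y).deriv) y 0
  simp only [zero_div, Phi_zero, zero_mul, Real.sin_zero, mul_zero, integral_zero] at this
  linarith

lemma norm_bernoulliChar_sq (p t : ℝ) :
    ‖bernoulliChar p t‖ ^ 2 = 1 - 4 * (p * (1 - p)) * Real.sin (t / 2) ^ 2 := by
  have hre : (bernoulliChar p t).re =
      (1 - p) * Real.cos (p * t) + p * Real.cos ((1 - p) * t) := by
    rw [bernoulliChar, ← Complex.ofReal_one, ← Complex.ofReal_sub, Complex.add_re,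
      Complex.re_ofReal_mul, Complex.re_ofReal_mul, Complex.exp_ofReal_mul_I_re,
      Complex.exp_ofReal_mul_I_re, Real.cos_neg]
  have him : (bernoulliChar p t).im =
      (1 - p) * Real.sin (p * t) - p * Real.sin ((1 - p) * t) := by
    rw [bernoulliChar, ← Complex.ofReal_one, ← Complex.ofReal_sub, Complex.add_im,
      Complex.im_ofReal_mul, Complex.im_ofReal_mul, Complex.exp_ofReal_mul_I_im,
      Complex.exp_ofReal_mul_I_im, Real.sin_neg]
    ring
  have hc : Real.cos (p * t) * Real.cos ((1 - p) * t) - Real.sin (p * t) * Real.sin ((1 - p) * t)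
      = 1 - 2 * Real.sin (t / 2) ^ 2 := by
    rw [← Real.cos_add, ← Real.cos_two_mul_eq_one_sub]
    ring_nf
  rw [Complex.sq_norm, Complex.normSq_apply, hre, him]
  have h1 := Real.sin_sq_add_cos_sq (p * t)
  have h2 := Real.sin_sq_add_cos_sq ((1 - p) * t)
  linear_combination (1 - p) ^ 2 * h1 + p ^ 2 * h2 + 2 * p * (1 - p) * hc

lemma norm_bernoulliChar_le (p t : ℝ) :
    ‖bernoulliChar p t‖ ≤ Real.exp (-(2 * (p * (1 - p)) * Real.sin (t / 2) ^ 2)) := by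
  refine le_of_sq_le_sq ?_ (Real.exp_pos _).le
  rw [norm_bernoulliChar_sq, ← Real.exp_nat_mul]
  have := Real.add_one_le_exp (-(4 * (p * (1 - p)) * Real.sin (t / 2) ^ 2))
  calc _ ≤ _ := by linarith
    _ ≤ _ := this
    _ = _ := by push_cast; ring_nf

lemma sq_div_four_mul_le_sin_sq {t : ℝ} (h0 : 0 ≤ t) (h1 : t ≤ 1) :
    11 / 48 * t ^ 2 ≤ Real.sin (t / 2) ^ 2 := by
  rcases h0.eq_or_lt with rfl | h0
  · simp
  have := Real.sin_gt_sub_cube (x := t / 2) (by positivity)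
  have h2 : 23 / 48 * t ≤ Real.sin (t / 2) := by nlinarith [mul_pos h0 h0]
  calc 11 / 48 * t ^ 2 ≤ (23 / 48 * t) ^ 2 := by nlinarith [sq_nonneg t]
    _ ≤ _ := by gcongr

lemma norm_exp_mul_I_sub_taylor_le {x : ℝ} (hx : |x| ≤ 1) :
    ‖Complex.exp ((x : ℂ) * Complex.I) -
      (1 + x * Complex.I - x ^ 2 / 2 - x ^ 3 / 6 * Complex.I + x ^ 4 / 24)‖ ≤ |x| ^ 5 / 100 := by
  have hn : ‖(x : ℂ) * Complex.I‖ = |x| := by simp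
  have h := Complex.exp_bound (x := (x : ℂ) * Complex.I) (by rwa [hn]) (n := 5) (by norm_num)
  rw [hn] at h
  have e : ∑ m ∈ Finset.range 5, ((x : ℂ) * Complex.I) ^ m / (m.factorial : ℂ) =
      1 + x * Complex.I - x ^ 2 / 2 - x ^ 3 / 6 * Complex.I + x ^ 4 / 24 := by
    have h3 : Complex.I ^ 3 = -Complex.I := by rw [pow_succ, Complex.I_sq]; ring
    simp only [Finset.sum_range_succ, Finset.sum_range_zero, Nat.factorial, mul_pow,
      Complex.I_sq, h3, Complex.I_pow_four]
    push_cast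
    ring
  rw [e] at h
  refine h.trans (le_of_eq ?_)
  norm_num [Nat.factorial]
  ring

lemma norm_bernoulliChar_sub_le {p t : ℝ} (hp0 : 0 ≤ p) (hp1 : p ≤ 1 / 2) (h0 : 0 ≤ t)
    (h1 : t ≤ 1) :
    ‖bernoulliChar p t - Complex.exp (((-(p * (1 - p)) * t ^ 2 / 2 : ℝ) : ℂ) +
      ((p * (1 - p) * (1 - 2 * p) * t ^ 3 / 6 : ℝ) : ℂ) * Complex.I)‖ ≤
      p * (1 - p) * (|1 - 6 * (p * (1 - p))| * t ^ 4 / 24 + t ^ 5 / 10) := by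
  set v := p * (1 - p) with hv
  have hv0 : 0 ≤ v := by nlinarith
  have hv1 : v ≤ 1 / 4 := by nlinarith [sq_nonneg (1 - 2 * p)]
  set w : ℂ := ((-v * t ^ 2 / 2 : ℝ) : ℂ) + ((v * (1 - 2 * p) * t ^ 3 / 6 : ℝ) : ℂ) * Complex.I
    with hw
  have ha := norm_exp_mul_I_sub_taylor_le (x := p * t) (by rw [abs_le]; constructor <;> nlinarith)
  have hb := norm_exp_mul_I_sub_taylor_le (x := -((1 - p) * t))
    (by rw [abs_le]; constructor <;> nlinarith)
  rw [abs_neg, abs_of_nonneg (by nlinarith)] at hb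
  rw [abs_of_nonneg (by positivity)] at ha
  have ht3 : t ^ 3 ≤ t ^ 2 := pow_le_pow_of_le_one h0 h1 (by norm_num)
  have ht6 : t ^ 6 ≤ t ^ 5 := pow_le_pow_of_le_one h0 h1 (by norm_num)
  have hwn : ‖w‖ ≤ 2 / 3 * (v * t ^ 2) := by
    refine (norm_add_le _ _).trans ?_
    rw [norm_mul, Complex.norm_I, mul_one, Complex.norm_real, Complex.norm_real, Real.norm_eq_abs,
      Real.norm_eq_abs, abs_of_nonpos (by nlinarith [mul_nonneg hv0 (sq_nonneg t)]),
      abs_of_nonneg (by have : 0 ≤ 1 - 2 * p := by linarith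
                        positivity)]
    have : v * (1 - 2 * p) * t ^ 3 ≤ v * 1 * t ^ 2 := by gcongr; linarith
    linarith
  have hvt : v * t ^ 2 ≤ 1 / 4 * 1 := by gcongr; exact pow_le_one₀ h0 h1
  have hexp := Complex.exp_bound (x := w) (by linarith) (n := 3) (by norm_num)
  have e3 : ∑ m ∈ Finset.range 3, w ^ m / (m.factorial : ℂ) = 1 + w + w ^ 2 / 2 := by
    simp [Finset.sum_range_succ, Nat.factorial]
  rw [e3] at hexp
  have hexp' : ‖Complex.exp w - (1 + w + w ^ 2 / 2)‖ ≤ v * (t ^ 5 / 200) := by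
    refine hexp.trans ?_
    calc _ ≤ (2 / 3 * (v * t ^ 2)) ^ 3 *
            ((Nat.succ 3 : ℕ) * (((Nat.factorial 3 : ℕ) : ℝ) * (3 : ℕ))⁻¹) := by
          gcongr
      _ = 16 / 243 * (v * v ^ 2 * t ^ 6) := by norm_num [Nat.factorial]; ring
      _ ≤ 16 / 243 * (v * (1 / 4) ^ 2 * t ^ 5) := by gcongr
      _ ≤ _ := by nlinarith [mul_nonneg hv0 (pow_nonneg h0 5)]
  have hmid : ‖(v : ℂ) * ((1 - 6 * v : ℝ) * t ^ 4 / 24 +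
      (v * (1 - 2 * p) * t ^ 5 / 12 : ℝ) * Complex.I + (v * (1 - 2 * p) ^ 2 * t ^ 6 / 72 : ℝ))‖ ≤
      v * (|1 - 6 * v| * t ^ 4 / 24 + t ^ 5 / 40) := by
    rw [norm_mul, Complex.norm_real, Real.norm_of_nonneg hv0]
    gcongr
    refine (norm_add₃_le).trans ?_
    have n1 : ‖((1 - 6 * v : ℝ) * t ^ 4 / 24 : ℂ)‖ = |1 - 6 * v| * t ^ 4 / 24 := by
      rw [norm_div, norm_mul, Complex.norm_real, norm_pow, Complex.norm_real,
        Real.norm_of_nonneg h0]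
      simp
    have n2 : ‖((v * (1 - 2 * p) * t ^ 5 / 12 : ℝ) * Complex.I : ℂ)‖ ≤ 1 / 4 * 1 * t ^ 5 / 12 := by
      rw [norm_mul, Complex.norm_I, mul_one, Complex.norm_real, Real.norm_of_nonneg
        (by have : 0 ≤ 1 - 2 * p := by linarith
            positivity)]
      have h2p : 0 ≤ 1 - 2 * p := by linarith
      have : 1 - 2 * p ≤ 1 := by linarith
      gcongr
    have n3 : ‖((v * (1 - 2 * p) ^ 2 * t ^ 6 / 72 : ℝ) : ℂ)‖ ≤ 1 / 4 * 1 * t ^ 5 / 72 := by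
      rw [Complex.norm_real, Real.norm_of_nonneg (by positivity)]
      gcongr
      exact pow_le_one₀ (by linarith) (by linarith)
    have := pow_nonneg h0 5
    linarith
  have hdec : bernoulliChar p t - Complex.exp w =
      (1 - p : ℝ) * (Complex.exp (((p * t : ℝ) : ℂ) * Complex.I) -
        (1 + (p * t : ℝ) * Complex.I - ((p * t : ℝ) : ℂ) ^ 2 / 2 -
          ((p * t : ℝ) : ℂ) ^ 3 / 6 * Complex.I + ((p * t : ℝ) : ℂ) ^ 4 / 24)) +
      (p : ℝ) * (Complex.exp (((-((1 - p) * t) : ℝ) : ℂ) * Complex.I) -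
        (1 + (-((1 - p) * t) : ℝ) * Complex.I - ((-((1 - p) * t) : ℝ) : ℂ) ^ 2 / 2 -
          ((-((1 - p) * t) : ℝ) : ℂ) ^ 3 / 6 * Complex.I +
          ((-((1 - p) * t) : ℝ) : ℂ) ^ 4 / 24)) +
      (v : ℂ) * ((1 - 6 * v : ℝ) * t ^ 4 / 24 +
      (v * (1 - 2 * p) * t ^ 5 / 12 : ℝ) * Complex.I + (v * (1 - 2 * p) ^ 2 * t ^ 6 / 72 : ℝ)) -
      (Complex.exp w - (1 + w + w ^ 2 / 2)) := by
    rw [bernoulliChar, hw, hv]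
    push_cast
    ring_nf
    rw [Complex.I_sq]
    ring
  rw [hdec]
  refine (norm_sub_le _ _).trans ?_
  have hs := norm_add₃_le (a := (1 - p : ℝ) * (Complex.exp (((p * t : ℝ) : ℂ) * Complex.I) -
        (1 + (p * t : ℝ) * Complex.I - ((p * t : ℝ) : ℂ) ^ 2 / 2 -
          ((p * t : ℝ) : ℂ) ^ 3 / 6 * Complex.I + ((p * t : ℝ) : ℂ) ^ 4 / 24)))
    (b := (p : ℝ) * (Complex.exp (((-((1 - p) * t) : ℝ) : ℂ) * Complex.I) -
        (1 + (-((1 - p) * t) : ℝ) * Complex.I - ((-((1 - p) * t) : ℝ) : ℂ) ^ 2 / 2 -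
          ((-((1 - p) * t) : ℝ) : ℂ) ^ 3 / 6 * Complex.I +
          ((-((1 - p) * t) : ℝ) : ℂ) ^ 4 / 24)))
    (c := (v : ℂ) * ((1 - 6 * v : ℝ) * t ^ 4 / 24 +
      (v * (1 - 2 * p) * t ^ 5 / 12 : ℝ) * Complex.I + (v * (1 - 2 * p) ^ 2 * t ^ 6 / 72 : ℝ)))
  rw [norm_mul, norm_mul, Complex.norm_real, Complex.norm_real, Real.norm_of_nonneg hp0,
    Real.norm_of_nonneg (show 0 ≤ 1 - p by linarith)] at hs
  have q1 : (1 - p) * ((p * t) ^ 5 / 100) ≤ v * (t ^ 5 / 100) := by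
    rw [hv, mul_pow]
    have : p ^ 5 ≤ p := pow_le_of_le_one hp0 (by linarith) (by norm_num)
    calc _ ≤ (1 - p) * ((p * t ^ 5) / 100) := by
          have : 0 ≤ 1 - p := by linarith
          gcongr
      _ = _ := by ring
  have q2 : p * (((1 - p) * t) ^ 5 / 100) ≤ v * (t ^ 5 / 100) := by
    rw [hv, mul_pow]
    have : (1 - p) ^ 5 ≤ 1 - p := pow_le_of_le_one (by linarith) (by linarith) (by norm_num)
    calc _ ≤ p * (((1 - p) * t ^ 5) / 100) := by gcongr
      _ = _ := by ring
  have q3 := mul_le_mul_of_nonneg_left ha (show 0 ≤ 1 - p by linarith)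
  have q4 := mul_le_mul_of_nonneg_left hb hp0
  have := mul_nonneg hv0 (pow_nonneg h0 5)
  linarith

lemma norm_pow_sub_pow_le {a b : ℂ} {M : ℝ} (ha : ‖a‖ ≤ M) (hb : ‖b‖ ≤ M) (n : ℕ) :
    ‖a ^ (n + 1) - b ^ (n + 1)‖ ≤ (n + 1) * M ^ n * ‖a - b‖ := by
  have hM : 0 ≤ M := (norm_nonneg a).trans ha
  rw [← (Commute.all a b).geom_sum₂_mul, norm_mul]
  gcongr
  refine (norm_sum_le _ _).trans ((Finset.sum_le_card_nsmul _ _ (M ^ n) fun i hi => ?_).trans_eq ?_)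
  · have hi : i ≤ n := by simpa [Nat.lt_succ_iff] using hi
    rw [norm_mul, norm_pow, norm_pow]
    calc _ ≤ M ^ i * M ^ (n + 1 - 1 - i) := by gcongr
      _ = M ^ n := by rw [← pow_add]; congr 1; omega
  · simp

lemma abs_inv_two_sin_half_sub_inv_le {t : ℝ} (h0 : 0 < t) (h1 : t ≤ 1) :
    |(2 * Real.sin (t / 2))⁻¹ - t⁻¹| ≤ t / 23 := by
  have hs := Real.sin_gt_sub_cube (x := t / 2) (by positivity)
  have hs' := Real.sin_lt (x := t / 2) (by positivity)
  have ht : t ^ 3 ≤ t := pow_le_of_le_one h0.le h1 (by norm_num)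
  have h2 : 23 / 24 * t ≤ 2 * Real.sin (t / 2) := by nlinarith
  have h3 : 0 < 2 * Real.sin (t / 2) := by linarith
  rw [inv_sub_inv h3.ne' h0.ne', abs_of_nonneg (div_nonneg (by linarith) (by positivity)),
    div_le_iff₀ (by positivity)]
  calc t - 2 * Real.sin (t / 2) ≤ t / 23 * (23 / 24 * t * t) := by nlinarith
    _ ≤ _ := by gcongr

lemma norm_bernoulliChar_pow_div_sub_le {p t : ℝ} (hp0 : 0 ≤ p) (hp1 : p ≤ 1 / 2)
    (h6 : |1 - 6 * (p * (1 - p))| ≤ 1 / 2) {n : ℕ} (hn : 55 ≤ n) (h0 : 0 < t) (h1 : t ≤ 1) :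
    ‖bernoulliChar p t ^ n / ((2 * Real.sin (t / 2) : ℝ) : ℂ) -
      ((Real.exp (-(n * p * (1 - p)) * t ^ 2 / 2) / t : ℝ) : ℂ)‖ ≤
      Real.exp (-(9 / 20 * (n * p * (1 - p))) * t ^ 2) *
        (t / 23 + n * p * (1 - p) * (t ^ 3 / 48 + t ^ 4 / 10)) +
      Real.exp (-(n * p * (1 - p)) * t ^ 2 / 2) * (n * p * (1 - p) * (1 - 2 * p) * t ^ 2 / 6) := by
  have hq : 0 ≤ 1 - 2 * p := by linarith
  obtain ⟨m, rfl⟩ : ∃ m, n = m + 1 := ⟨n - 1, by omega⟩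
  set a := bernoulliChar p t with ha
  set v := p * (1 - p) with hv
  have hv0 : 0 ≤ v := mul_nonneg hp0 (by linarith)
  have hmul : ((m + 1 : ℕ) : ℝ) * p * (1 - p) = (m + 1) * v := by push_cast; rw [hv]; ring
  rw [hmul]
  have hm : (54 : ℝ) ≤ m := by exact_mod_cast (by omega : 54 ≤ m)
  set b : ℂ := Complex.exp (((-v * t ^ 2 / 2 : ℝ) : ℂ) +
      ((v * (1 - 2 * p) * t ^ 3 / 6 : ℝ) : ℂ) * Complex.I) with hb
  set M := Real.exp (-(11 / 24 * v * t ^ 2)) with hM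
  have hvt : 0 ≤ v * t ^ 2 := by positivity
  have haM : ‖a‖ ≤ M := by
    refine (norm_bernoulliChar_le p t).trans (Real.exp_le_exp.2 ?_)
    have := mul_le_mul_of_nonneg_left (sq_div_four_mul_le_sin_sq h0.le h1) hv0
    rw [← hv]
    linarith
  have hbM : ‖b‖ ≤ M := by
    rw [hb, Complex.norm_exp]
    refine Real.exp_le_exp.2 ?_
    rw [Complex.add_re, Complex.ofReal_re, Complex.re_ofReal_mul, Complex.I_re]
    linarith
  have hMm : M ^ m ≤ Real.exp (-(9 / 20 * ((m + 1) * v)) * t ^ 2) := by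
    rw [hM, ← Real.exp_nat_mul]
    refine Real.exp_le_exp.2 ?_
    nlinarith
  have hM1 : M ≤ 1 := Real.exp_le_one_iff.2 (by linarith)
  have hM0 : 0 ≤ M := (Real.exp_pos _).le
  have hpow := norm_pow_sub_pow_le haM hbM m
  have hab : ‖a - b‖ ≤ v * (t ^ 4 / 48 + t ^ 5 / 10) := by
    refine (norm_bernoulliChar_sub_le hp0 hp1 h0.le h1).trans ?_
    rw [← hv]
    have : |1 - 6 * v| * t ^ 4 ≤ 1 / 2 * t ^ 4 := by gcongr
    refine mul_le_mul_of_nonneg_left ?_ hv0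
    linarith
  set E := Real.exp (-((m + 1) * v) * t ^ 2 / 2) with hE
  have hbn : b ^ (m + 1) = E *
      Complex.exp (Complex.I * ((m + 1) * v * (1 - 2 * p) * t ^ 3 / 6 : ℝ)) := by
    rw [hb, ← Complex.exp_nat_mul, hE, Complex.ofReal_exp, ← Complex.exp_add]
    congr 1
    push_cast
    ring
  have hdec : a ^ (m + 1) / ((2 * Real.sin (t / 2) : ℝ) : ℂ) - ((E / t : ℝ) : ℂ) =
      a ^ (m + 1) * (((2 * Real.sin (t / 2))⁻¹ - t⁻¹ : ℝ) : ℂ) +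
      (a ^ (m + 1) - b ^ (m + 1)) * ((t⁻¹ : ℝ) : ℂ) +
      ((E * t⁻¹ : ℝ) : ℂ) *
        (Complex.exp (Complex.I * ((m + 1) * v * (1 - 2 * p) * t ^ 3 / 6 : ℝ)) - 1) := by
    rw [hbn]
    push_cast
    ring
  rw [hdec]
  refine norm_add₃_le.trans ?_
  rw [norm_mul, norm_mul, norm_mul, Complex.norm_real, Complex.norm_real, Complex.norm_real,
    Real.norm_of_nonneg (inv_nonneg.2 h0.le),
    Real.norm_of_nonneg (show 0 ≤ E * t⁻¹ by positivity), norm_pow, Real.norm_eq_abs]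
  have k1 : ‖a‖ ^ (m + 1) * |(2 * Real.sin (t / 2))⁻¹ - t⁻¹| ≤
      Real.exp (-(9 / 20 * ((m + 1) * v)) * t ^ 2) * (t / 23) := by
    gcongr
    · calc ‖a‖ ^ (m + 1) ≤ M ^ (m + 1) := by gcongr
        _ ≤ M ^ m := pow_le_pow_of_le_one hM0 hM1 (by omega)
        _ ≤ _ := hMm
    · exact abs_inv_two_sin_half_sub_inv_le h0 h1
  have k2 : ‖a ^ (m + 1) - b ^ (m + 1)‖ * t⁻¹ ≤
      Real.exp (-(9 / 20 * ((m + 1) * v)) * t ^ 2) *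
        ((m + 1) * v * (t ^ 3 / 48 + t ^ 4 / 10)) := by
    calc _ ≤ ((m + 1) * Real.exp (-(9 / 20 * ((m + 1) * v)) * t ^ 2) *
          (v * (t ^ 4 / 48 + t ^ 5 / 10))) * t⁻¹ := by
          gcongr
          refine hpow.trans ?_
          gcongr
      _ = _ := by field_simp
  have k3 := mul_le_mul_of_nonneg_left (Real.norm_exp_I_mul_ofReal_sub_one_le
    (x := (m + 1) * v * (1 - 2 * p) * t ^ 3 / 6)) (show 0 ≤ E * t⁻¹ by positivity)
  rw [Real.norm_of_nonneg (by positivity)] at k3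
  have k4 : E * t⁻¹ * ((m + 1) * v * (1 - 2 * p) * t ^ 3 / 6) =
      E * ((m + 1) * v * (1 - 2 * p) * t ^ 2 / 6) := by
    field_simp
  linarith

lemma norm_bernoulliChar_pow_div_le {p t : ℝ} (hp0 : 0 ≤ p) (hp1 : p ≤ 1 / 2) (n : ℕ)
    (h1 : 1 ≤ t) (ht : t ≤ Real.pi) :
    ‖bernoulliChar p t ^ n / ((2 * Real.sin (t / 2) : ℝ) : ℂ)‖ ≤
      2 * (t ^ 5 * Real.exp (-((n * p * (1 - p)) / 5) * t ^ 2)) := by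
  have hv0 : 0 ≤ p * (1 - p) := mul_nonneg hp0 (by linarith)
  have hpi := Real.pi_lt_d2
  have hpi0 := Real.pi_pos
  have hs : t / Real.pi ≤ Real.sin (t / 2) := by
    have := Real.mul_le_sin (x := t / 2) (by linarith) (by linarith)
    refine le_trans (le_of_eq ?_) this
    field_simp
  have hs1 : 5 / 16 * t ≤ Real.sin (t / 2) := by
    refine le_trans ?_ hs
    rw [le_div_iff₀ hpi0]
    nlinarith
  have hs2 : t ^ 2 / 10 ≤ Real.sin (t / 2) ^ 2 := by
    calc t ^ 2 / 10 ≤ (t / Real.pi) ^ 2 := by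
          rw [div_pow]
          gcongr
          nlinarith
      _ ≤ _ := by gcongr
  have hs0 : 0 < 2 * Real.sin (t / 2) := by linarith
  rw [norm_div, norm_pow, Complex.norm_real, Real.norm_of_nonneg hs0.le, div_le_iff₀ hs0]
  have h5 : 1 ≤ t ^ 5 := one_le_pow₀ h1
  calc ‖bernoulliChar p t‖ ^ n
      ≤ Real.exp (-(2 * (p * (1 - p)) * Real.sin (t / 2) ^ 2)) ^ n := by
        gcongr; exact norm_bernoulliChar_le p t
    _ ≤ Real.exp (-((n * p * (1 - p)) / 5) * t ^ 2) := by
        rw [← Real.exp_nat_mul]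
        refine Real.exp_le_exp.2 ?_
        have := mul_le_mul_of_nonneg_left hs2 (mul_nonneg (Nat.cast_nonneg (α := ℝ) n) hv0)
        linarith
    _ ≤ Real.exp (-((n * p * (1 - p)) / 5) * t ^ 2) * (t ^ 5 * (2 * (2 * Real.sin (t / 2)))) := by
        refine le_mul_of_one_le_right (Real.exp_pos _).le ?_
        nlinarith
    _ = _ := by ring

lemma integral_pow_mul_exp_neg_mul_sq {c : ℝ} (hc : 0 < c) (k : ℕ) :
    IntegrableOn (fun t : ℝ => t ^ k * Real.exp (-c * t ^ 2)) (Ioi 0) ∧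
    ∫ t in Ioi (0 : ℝ), t ^ k * Real.exp (-c * t ^ 2) =
      c ^ (-((k : ℝ) + 1) / 2) * (1 / 2) * Real.Gamma ((k + 1) / 2) := by
  have hk : (-1 : ℝ) < k := by linarith [Nat.cast_nonneg (α := ℝ) k]
  have h1 := integrableOn_rpow_mul_exp_neg_mul_sq hc hk
  have h2 := integral_rpow_mul_exp_neg_mul_rpow (p := 2) two_pos hk hc
  simp only [Real.rpow_natCast, Real.rpow_two] at h1 h2
  exact ⟨h1, h2⟩

lemma integral_sq_mul_exp_neg_mul_sq_div_two {V : ℝ} (hV : 0 < V) :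
    ∫ t in Ioi (0 : ℝ), t ^ 2 * Real.exp (-(V / 2) * t ^ 2) =
      Real.pi * (Real.sqrt (2 * Real.pi))⁻¹ / (V * Real.sqrt V) := by
  rw [(integral_pow_mul_exp_neg_mul_sq (by positivity) 2).2,
    show (((2 : ℕ) : ℝ) + 1) / 2 = 1 / 2 + 1 by norm_num, Real.Gamma_add_one (by norm_num),
    Real.Gamma_one_half_eq,
    show -(((2 : ℕ) : ℝ) + 1) / 2 = -(1 + 1 / 2) by norm_num, Real.rpow_neg (by positivity),
    Real.rpow_add (by positivity), Real.rpow_one, ← Real.sqrt_eq_rpow,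
    Real.sqrt_div hV.le, Real.sqrt_mul (by norm_num)]
  have h1 : 0 < Real.sqrt Real.pi := Real.sqrt_pos.2 Real.pi_pos
  have h2 : 0 < Real.sqrt V := Real.sqrt_pos.2 hV
  have h3 : 0 < Real.sqrt 2 := by positivity
  field_simp
  rw [Real.sq_sqrt Real.pi_pos.le, Real.sq_sqrt (by norm_num)]

lemma integral_odd_pow_mul_exp_neg_mul_sq {c : ℝ} (hc : 0 < c) (k : ℕ) :
    ∫ t in Ioi (0 : ℝ), t ^ (2 * k + 1) * Real.exp (-c * t ^ 2) =
      k.factorial / (2 * c ^ (k + 1)) := by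
  rw [(integral_pow_mul_exp_neg_mul_sq hc _).2,
    show (((2 * k + 1 : ℕ) : ℝ) + 1) / 2 = k + 1 by push_cast; ring, Real.Gamma_nat_eq_factorial,
    show -(((2 * k + 1 : ℕ) : ℝ) + 1) / 2 = -((k + 1 : ℕ) : ℝ) by push_cast; ring,
    Real.rpow_neg hc.le, Real.rpow_natCast]
  field_simp

/-- A Gaussian-type majorant of the difference between the Fourier integrands of the binomial and
the normal distribution functions. -/
noncomputable def fourierMajorant (V p t : ℝ) : ℝ :=
  1 / 23 * (t ^ 1 * Real.exp (-(9 / 20 * V) * t ^ 2)) +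
  V / 45 * (t ^ 3 * Real.exp (-(9 / 20 * V) * t ^ 2)) +
  5 * V / 2 * (t ^ 5 * Real.exp (-(9 / 20 * V) * t ^ 2)) +
  V * (1 - 2 * p) / 6 * (t ^ 2 * Real.exp (-(V / 2) * t ^ 2)) +
  3 * (t ^ 5 * Real.exp (-(V / 5) * t ^ 2))

lemma integral_fourierMajorant {V : ℝ} (hV : 0 < V) (p : ℝ) :
    IntegrableOn (fourierMajorant V p) (Ioi 0) ∧
    ∫ t in Ioi 0, fourierMajorant V p t =
      Real.pi * ((1 - 2 * p) / 6 * (Real.sqrt (2 * Real.pi))⁻¹ / Real.sqrt V) +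
      (10 / 207 + 40 / 729 + 20000 / 729 / V + 375 / V ^ 2) / V := by
  have h9 : 0 < 9 / 20 * V := by positivity
  have i1 := (integral_pow_mul_exp_neg_mul_sq h9 1).1.const_mul (1 / 23)
  have i2 := (integral_pow_mul_exp_neg_mul_sq h9 3).1.const_mul (V / 45)
  have i3 := (integral_pow_mul_exp_neg_mul_sq h9 5).1.const_mul (5 * V / 2)
  have i4 := (integral_pow_mul_exp_neg_mul_sq (show 0 < V / 2 by positivity) 2).1.const_mul
    (V * (1 - 2 * p) / 6)
  have i5 := (integral_pow_mul_exp_neg_mul_sq (show 0 < V / 5 by positivity) 5).1.const_mul 3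
  have e1 := integral_odd_pow_mul_exp_neg_mul_sq h9 0
  have e2 := integral_odd_pow_mul_exp_neg_mul_sq h9 1
  have e3 := integral_odd_pow_mul_exp_neg_mul_sq h9 2
  have e5 := integral_odd_pow_mul_exp_neg_mul_sq (show 0 < V / 5 by positivity) 2
  norm_num only [Nat.factorial, Nat.cast_ofNat, Nat.cast_one] at e1 e2 e3 e5
  refine ⟨(((i1.add i2).add i3).add i4).add i5, ?_⟩
  refine (integral_add' (((i1.add i2).add i3).add i4) i5).trans ?_
  rw [integral_add' ((i1.add i2).add i3) i4,
    integral_add' (i1.add i2) i3, integral_add' i1 i2, integral_const_mul, integral_const_mul,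
    integral_const_mul, integral_const_mul, integral_const_mul,
    integral_sq_mul_exp_neg_mul_sq_div_two hV, e1, e2, e3, e5]
  have : 0 < Real.sqrt V := by positivity
  have : 0 < Real.sqrt (2 * Real.pi) := by positivity
  field_simp
  ring

lemma norm_indicator_sub_le_fourierMajorant {p t : ℝ} (hp0 : 0 ≤ p) (hp1 : p ≤ 1 / 2)
    (h6 : |1 - 6 * (p * (1 - p))| ≤ 1 / 2) {n : ℕ} (hn : 55 ≤ n) (h0 : 0 < t) :
    ‖(Ioc 0 Real.pi).indicator
        (fun t : ℝ => bernoulliChar p t ^ n / ((2 * Real.sin (t / 2) : ℝ) : ℂ)) t -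
      ((Real.exp (-(n * p * (1 - p)) * t ^ 2 / 2) / t : ℝ) : ℂ)‖ ≤
      fourierMajorant (n * p * (1 - p)) p t := by
  have hV0 : 0 ≤ n * p * (1 - p) := by
    have : 0 ≤ 1 - p := by linarith
    positivity
  have hq : 0 ≤ 1 - 2 * p := by linarith
  rcases le_or_gt t 1 with h1 | h1
  · have ht : t ∈ Ioc 0 Real.pi := ⟨h0, h1.trans (by linarith [Real.pi_gt_three])⟩
    rw [indicator_of_mem ht]
    refine (norm_bernoulliChar_pow_div_sub_le hp0 hp1 h6 hn h0 h1).trans ?_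
    rw [fourierMajorant]
    generalize n * p * (1 - p) = V at *
    have hpoly : t / 23 + V * (t ^ 3 / 48 + t ^ 4 / 10) ≤
        1 / 23 * t + V / 45 * t ^ 3 + 5 * V / 2 * t ^ 5 := by
      have : t ^ 3 / 48 + t ^ 4 / 10 ≤ 1 / 45 * t ^ 3 + 5 / 2 * t ^ 5 := by
        have := mul_nonneg (pow_nonneg h0.le 3) (sq_nonneg (t - 1 / 50))
        have := pow_pos h0 3
        nlinarith
      nlinarith [mul_le_mul_of_nonneg_left this hV0]
    have h := mul_le_mul_of_nonneg_left hpoly (Real.exp_pos (-(9 / 20 * V) * t ^ 2)).le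
    have h5 : 0 ≤ t ^ 5 * Real.exp (-(V / 5) * t ^ 2) := by positivity
    rw [show -V * t ^ 2 / 2 = -(V / 2) * t ^ 2 by ring]
    linarith
  · have h5 : 1 ≤ t ^ 5 := one_le_pow₀ h1.le
    have hind : ‖(Ioc 0 Real.pi).indicator
        (fun t : ℝ => bernoulliChar p t ^ n / ((2 * Real.sin (t / 2) : ℝ) : ℂ)) t‖ ≤
        2 * (t ^ 5 * Real.exp (-((n * p * (1 - p)) / 5) * t ^ 2)) := by
      by_cases ht : t ≤ Real.pi
      · rw [indicator_of_mem (show t ∈ Ioc 0 Real.pi from ⟨h0, ht⟩)]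
        exact norm_bernoulliChar_pow_div_le hp0 hp1 n h1.le ht
      · rw [indicator_of_notMem (show t ∉ Ioc 0 Real.pi from fun h => ht h.2), norm_zero]
        positivity
    refine (norm_sub_le _ _).trans ((add_le_add_left hind _).trans ?_)
    rw [Complex.norm_real, Real.norm_of_nonneg (by positivity), fourierMajorant]
    generalize n * p * (1 - p) = V at *
    have hE : Real.exp (-V * t ^ 2 / 2) / t ≤ t ^ 5 * Real.exp (-(V / 5) * t ^ 2) := by
      calc _ ≤ Real.exp (-V * t ^ 2 / 2) := div_le_self (Real.exp_pos _).le h1.le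
        _ ≤ 1 * Real.exp (-(V / 5) * t ^ 2) := by
          rw [one_mul]
          refine Real.exp_le_exp.2 ?_
          nlinarith [mul_nonneg hV0 (sq_nonneg t)]
        _ ≤ _ := by gcongr
    have : 0 ≤ 1 / 23 * (t ^ 1 * Real.exp (-(9 / 20 * V) * t ^ 2)) +
      V / 45 * (t ^ 3 * Real.exp (-(9 / 20 * V) * t ^ 2)) +
      5 * V / 2 * (t ^ 5 * Real.exp (-(9 / 20 * V) * t ^ 2)) +
      V * (1 - 2 * p) / 6 * (t ^ 2 * Real.exp (-(V / 2) * t ^ 2)) := by positivity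
    linarith

/-- The binomial distribution function at `x` is compared with the normal one at the midpoint
`⌈x⌉ - 1 / 2` of the lattice cell containing `x`. -/
lemma abs_binomCDF_sub_Phi_midpoint_le {p : ℝ} (hp0 : 0 < p) (hp1 : p ≤ 1 / 2)
    (h6 : |1 - 6 * (p * (1 - p))| ≤ 1 / 2) {n : ℕ} (hn : 55 ≤ n) (x : ℝ) :
    |binomCDF n p x - Phi (((⌈x⌉ : ℝ) - 1 / 2 - n * p) / Real.sqrt (n * p * (1 - p)))| ≤
      Real.pi⁻¹ * ∫ t in Ioi 0, fourierMajorant (n * p * (1 - p)) p t := by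
  have hV : 0 < n * p * (1 - p) := by
    have : 0 < 1 - p := by linarith
    have : (0 : ℝ) < n := by exact_mod_cast (by omega : 0 < n)
    positivity
  obtain ⟨hfi, hf⟩ := binomCDF_eq_integral n p x
  set y : ℝ := (⌈x⌉ : ℝ) - 1 / 2 - n * p with hy
  obtain ⟨hgi, hg⟩ := Phi_div_sqrt_eq_integral hV y
  set f : ℝ → ℝ := fun t => (Complex.exp (((y * t : ℝ) : ℂ) * Complex.I) *
      bernoulliChar p t ^ n).im / (2 * Real.sin (t / 2)) with hfdef
  have hfi' : IntegrableOn ((Ioc 0 Real.pi).indicator f) (Ioi 0) :=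
    ((integrable_indicator_iff measurableSet_Ioc).2 hfi).integrableOn
  have hf' : ∫ t in Ioc 0 Real.pi, f t = ∫ t in Ioi 0, (Ioc 0 Real.pi).indicator f t := by
    rw [setIntegral_indicator measurableSet_Ioc, inter_eq_self_of_subset_right
      Ioc_subset_Ioi_self]
  rw [hf, hg, hf', add_sub_add_left_eq_sub, ← mul_sub, ← integral_sub hfi' hgi, abs_mul,
    abs_of_pos (inv_pos.2 Real.pi_pos)]
  refine mul_le_mul_of_nonneg_left ?_ (inv_pos.2 Real.pi_pos).le
  rw [← Real.norm_eq_abs]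
  refine norm_integral_le_of_norm_le (integral_fourierMajorant hV p).1
    ((ae_restrict_mem measurableSet_Ioi).mono fun t ht => ?_)
  refine le_trans ?_ (norm_indicator_sub_le_fourierMajorant hp0.le hp1 h6 hn ht)
  have him : (Ioc 0 Real.pi).indicator f t -
      Real.exp (-(n * p * (1 - p)) * t ^ 2 / 2) * Real.sin (y * t) / t =
      (Complex.exp (((y * t : ℝ) : ℂ) * Complex.I) * ((Ioc 0 Real.pi).indicator
        (fun t : ℝ => bernoulliChar p t ^ n / ((2 * Real.sin (t / 2) : ℝ) : ℂ)) t -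
      ((Real.exp (-(n * p * (1 - p)) * t ^ 2 / 2) / t : ℝ) : ℂ))).im := by
    rw [mul_sub (Complex.exp _), Complex.sub_im, Complex.im_mul_ofReal, Complex.exp_ofReal_mul_I_im]
    congr 1
    · by_cases ht : t ∈ Ioc 0 Real.pi
      · rw [indicator_of_mem ht, indicator_of_mem ht, hfdef, ← mul_div_assoc, Complex.div_ofReal_im]
      · rw [indicator_of_notMem ht, indicator_of_notMem ht, mul_zero, Complex.zero_im]
    · ring
  rw [him, Real.norm_eq_abs]
  refine (Complex.abs_im_le_norm _).trans ?_
  rw [norm_mul, Complex.norm_exp_ofReal_mul_I, one_mul]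

/-- For all `p ∈ [0.1689, 0.5]` and all integers `n ≥ 500000`,
`Δ_n(p) ≤ ℰ₁(p)/σ + 0.05532/σ²` where `σ = √(npq)` and
`ℰ₁(p) = (2 − p)/(3√(2π))`. -/
theorem Delta_le_E1_div_sigma (p : ℝ) (hp : p ∈ Set.Icc (0.1689 : ℝ) 0.5)
    (n : ℕ) (hn : 500000 ≤ n) :
    Delta n p ≤
      ((2 - p) / (3 * Real.sqrt (2 * Real.pi))) / Real.sqrt (n * p * (1 - p)) +
        0.05532 / (n * p * (1 - p)) := by
  obtain ⟨hpl, hpu⟩ := hp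
  norm_num at hpl hpu
  have hv : 7 / 50 ≤ p * (1 - p) := by nlinarith
  have hv' : p * (1 - p) ≤ 1 / 4 := by nlinarith [sq_nonneg (1 - 2 * p)]
  have h6 : |1 - 6 * (p * (1 - p))| ≤ 1 / 2 := by rw [abs_le]; constructor <;> linarith
  have hnR : (500000 : ℝ) ≤ n := by exact_mod_cast hn
  have hVl : 70000 ≤ n * p * (1 - p) := by nlinarith
  refine ciSup_le fun x => ?_
  have h1 := abs_binomCDF_sub_Phi_midpoint_le (by linarith) hpu h6 (by omega : 55 ≤ n) x
  rw [(integral_fourierMajorant (by linarith) p).2] at h1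
  have h2 := abs_Phi_sub_Phi_le
    (((⌈x⌉ : ℝ) - 1 / 2 - n * p) / Real.sqrt (n * p * (1 - p)))
    ((x - n * p) / Real.sqrt (n * p * (1 - p)))
  refine (abs_sub_le _ _ _).trans ((add_le_add h1 h2).trans ?_)
  generalize n * p * (1 - p) = V at *
  have hs : 0 < Real.sqrt V := Real.sqrt_pos.2 (by linarith)
  have hs2 : 0 < Real.sqrt (2 * Real.pi) := by positivity
  have h3 : |((⌈x⌉ : ℝ) - 1 / 2 - n * p) / Real.sqrt V - (x - n * p) / Real.sqrt V| ≤
      1 / 2 / Real.sqrt V := by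
    rw [← sub_div, abs_div, abs_of_pos hs]
    gcongr
    rw [abs_le]
    constructor <;> linarith [Int.le_ceil x, Int.ceil_lt_add_one x]
  have h4 : (10 / 207 + 40 / 729 + 20000 / 729 / V + 375 / V ^ 2) / V ≤
      Real.pi * (0.05532 / V) := by
    have hV : 0 < V := by linarith
    have a1 : 20000 / 729 / V ≤ 20000 / 729 / 70000 := by gcongr
    have a2 : 375 / V ^ 2 ≤ 375 / 70000 ^ 2 := by gcongr
    rw [← mul_div_assoc]
    gcongr
    have := Real.pi_gt_three
    norm_num at a1 a2 ⊢
    linarith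
  calc _ ≤ Real.pi⁻¹ * (Real.pi * ((1 - 2 * p) / 6 * (Real.sqrt (2 * Real.pi))⁻¹ / Real.sqrt V) +
          Real.pi * (0.05532 / V)) + (Real.sqrt (2 * Real.pi))⁻¹ * (1 / 2 / Real.sqrt V) := by
        gcongr
    _ = _ := by
        rw [← mul_add, inv_mul_cancel_left₀ Real.pi_ne_zero]
        field_simp
        ring
end

section
/- Let 0 < p ≤ 0.5, q = 1 − p, n an integer with σ² = npq ≥ 100. Then Δ_n(p) ≤ ℰ₁(p)/σ + 0.1618/σ², where ℰ₁(p) = (2 − p)/(3√(2π)) and Δ_n(p) = sup_{x ∈ ℝ} |F_{n,p}(x) − Φ((x − np)/√(npq))|. -/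
section

open Real Set Filter Topology

theorem le_of_hasDerivAt_nonneg {f f' : ℝ → ℝ} {a b : ℝ} (hab : a ≤ b)
    (h : ∀ t ∈ Icc a b, HasDerivAt f (f' t) t) (h0 : ∀ t ∈ Icc a b, 0 ≤ f' t) : f a ≤ f b := by
  refine monotoneOn_of_deriv_nonneg (convex_Icc a b)
    (fun t ht => (h t ht).continuousAt.continuousWithinAt)
    (fun t ht => (h t (interior_subset ht)).differentiableAt.differentiableWithinAt)
    (fun t ht => ?_) (left_mem_Icc.2 hab) (right_mem_Icc.2 hab) hab
  rw [(h t (interior_subset ht)).deriv]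
  exact h0 t (interior_subset ht)

/-- The standard normal density. -/
noncomputable def gaussDensity (x : ℝ) : ℝ := (√(2 * π))⁻¹ * exp (-x ^ 2 / 2)

theorem gaussDensity_pos (x : ℝ) : 0 < gaussDensity x := by unfold gaussDensity; positivity

theorem hasDerivAt_gaussDensity (x : ℝ) : HasDerivAt gaussDensity (-x * gaussDensity x) x := by
  unfold gaussDensity
  have h : HasDerivAt (fun x : ℝ => -x ^ 2 / 2) (-x) x := by
    have := ((hasDerivAt_pow 2 x).neg).div_const 2
    refine this.congr_deriv ?_; push_cast; ring
  refine (h.exp.const_mul (√(2 * π))⁻¹).congr_deriv ?_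
  ring

theorem Phi_eq_cdf (x : ℝ) : Phi x = ProbabilityTheory.cdf (ProbabilityTheory.gaussianReal 0 1) x := by
  rw [ProbabilityTheory.cdf_eq_real, MeasureTheory.measureReal_def,
    ProbabilityTheory.gaussianReal_apply_eq_integral _ one_ne_zero,
    ENNReal.toReal_ofReal
      (MeasureTheory.integral_nonneg fun _ => ProbabilityTheory.gaussianPDFReal_nonneg _ _ _),
    MeasureTheory.integral_Iic_eq_integral_Iio, Phi, ← MeasureTheory.integral_const_mul]
  simp [ProbabilityTheory.gaussianPDFReal]

theorem tendsto_Phi_atBot : Tendsto Phi atBot (𝓝 0) := by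
  rw [funext Phi_eq_cdf]; exact ProbabilityTheory.tendsto_cdf_atBot _

theorem tendsto_Phi_atTop : Tendsto Phi atTop (𝓝 1) := by
  rw [funext Phi_eq_cdf]; exact ProbabilityTheory.tendsto_cdf_atTop _

theorem Phi_mono : Monotone Phi := by
  rw [funext Phi_eq_cdf]; exact ProbabilityTheory.monotone_cdf _

theorem Phi_nonneg (x : ℝ) : 0 ≤ Phi x := by
  rw [Phi_eq_cdf]; exact ProbabilityTheory.cdf_nonneg _ _

theorem hasDerivAt_Phi (x : ℝ) : HasDerivAt Phi (gaussDensity x) x := by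
  have hc : Continuous fun t : ℝ => exp (-t ^ 2 / 2) := by fun_prop
  have hi : MeasureTheory.Integrable fun t : ℝ => exp (-t ^ 2 / 2) := by
    have := integrable_exp_neg_mul_sq (b := 1 / 2) (by norm_num)
    convert this using 3; ring
  have h1 : Phi = fun y => (√(2 * π))⁻¹ * ((∫ t in (0 : ℝ)..y, exp (-t ^ 2 / 2))
      + ∫ t in Iic (0 : ℝ), exp (-t ^ 2 / 2)) := by
    funext y
    rw [← intervalIntegral.integral_Iic_sub_Iic hi.integrableOn hi.integrableOn, sub_add_cancel,
      MeasureTheory.integral_Iic_eq_integral_Iio, Phi]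
  rw [h1]
  exact ((intervalIntegral.integral_hasDerivAt_right (hc.intervalIntegrable _ _)
    hc.aestronglyMeasurable.stronglyMeasurableAtFilter hc.continuousAt).add_const _).const_mul _

theorem Phi_neg (x : ℝ) : Phi (-x) = 1 - Phi x := by
  have hd : ∀ y, HasDerivAt (fun y => Phi y + Phi (-y)) 0 y := fun y => by
    have := (hasDerivAt_Phi y).add ((hasDerivAt_Phi (-y)).comp y (hasDerivAt_neg y))
    refine this.congr_deriv ?_
    simp [gaussDensity]
  have hc := is_const_of_deriv_eq_zero (fun y => (hd y).differentiableAt) (fun y => (hd y).deriv)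
  have ht : Tendsto (fun y => Phi y + Phi (-y)) atTop (𝓝 (1 + 0)) :=
    tendsto_Phi_atTop.add (tendsto_Phi_atBot.comp tendsto_neg_atTop_atBot)
  rw [show (fun y => Phi y + Phi (-y)) = fun _ => Phi x + Phi (-x) from funext fun y => hc y x] at ht
  have := tendsto_nhds_unique ht tendsto_const_nhds
  linarith

theorem Phi_sub_le {x y M : ℝ} (hxy : x ≤ y) (hM : ∀ t ∈ Icc x y, gaussDensity t ≤ M) :
    Phi y - Phi x ≤ M * (y - x) := by
  have := le_of_hasDerivAt_nonneg (f := fun t => M * t - Phi t) hxy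
    (fun t _ => ((hasDerivAt_id t).const_mul M).sub (hasDerivAt_Phi t))
    (fun t ht => by have := hM t ht; simpa using this)
  linarith

theorem gaussDensity_le_of_abs_le {x y : ℝ} (h : |x| ≤ |y|) : gaussDensity y ≤ gaussDensity x := by
  unfold gaussDensity
  have := sq_le_sq.2 h
  gcongr
  
theorem gaussDensity_le_zero (x : ℝ) : gaussDensity x ≤ gaussDensity 0 :=
  gaussDensity_le_of_abs_le (by simp)

theorem tendsto_pow_mul_gaussDensity (m : ℕ) :
    Tendsto (fun x => x ^ m * gaussDensity x) (cocompact ℝ) (𝓝 0) := by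
  have h := (tendsto_rpow_abs_mul_exp_neg_mul_sq_cocompact (a := 1 / 2) (by norm_num) m).const_mul
    (√(2 * π))⁻¹
  rw [mul_zero] at h
  refine tendsto_zero_iff_abs_tendsto_zero _ |>.2 (h.congr fun x => ?_)
  simp only [Function.comp, gaussDensity, abs_mul, abs_pow, rpow_natCast, abs_exp]
  rw [abs_of_pos (by positivity : 0 < (√(2 * π))⁻¹)]
  ring_nf

theorem Phi_le_gaussDensity {x : ℝ} (hx : x ≤ -1) : Phi x ≤ gaussDensity x := by
  have h0 : Tendsto gaussDensity atBot (𝓝 0) := by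
    have := (tendsto_pow_mul_gaussDensity 0).mono_left atBot_le_cocompact
    simpa using this
  have h1 := h0.sub tendsto_Phi_atBot
  rw [sub_zero] at h1
  have h2 : ∀ᶠ y in atBot, gaussDensity y - Phi y ≤ gaussDensity x - Phi x := by
    filter_upwards [eventually_le_atBot x] with y hy
    refine le_of_hasDerivAt_nonneg (f := fun t => gaussDensity t - Phi t) hy
      (fun t _ => (hasDerivAt_gaussDensity t).sub (hasDerivAt_Phi t)) (fun t ht => ?_)
    have := gaussDensity_pos t
    nlinarith [ht.2]
  linarith [le_of_tendsto h1 h2]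
/-- Relative entropy of the Bernoulli law with parameter `x` with respect to that with
parameter `p`. -/
noncomputable def bernoulliKL (x p : ℝ) : ℝ :=
  x * (log x - log p) + (1 - x) * (log (1 - x) - log (1 - p))

theorem bernoulliKL_self (x : ℝ) : bernoulliKL x x = 0 := by simp [bernoulliKL]

theorem bernoulliKL_one_sub (x p : ℝ) : bernoulliKL (1 - x) (1 - p) = bernoulliKL x p := by
  simp only [bernoulliKL, sub_sub_cancel]; ring

theorem hasDerivAt_bernoulliKL_right (x : ℝ) {p : ℝ} (h0 : 0 < p) (h1 : p < 1) :
    HasDerivAt (fun p => bernoulliKL x p) ((p - x) / (p * (1 - p))) p := by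
  have hq : 0 < 1 - p := by linarith
  have e1 := ((hasDerivAt_log h0.ne').const_sub (log x)).const_mul x
  have e2 := ((((hasDerivAt_id p).const_sub 1).log hq.ne').const_sub (log (1 - x))).const_mul (1 - x)
  refine (e1.add e2).congr_deriv ?_
  simp only [id]
  field_simp
  ring

theorem hasDerivAt_bernoulliKL_left (p : ℝ) {x : ℝ} (h0 : 0 < x) (h1 : x < 1) :
    HasDerivAt (fun x => bernoulliKL x p) (log x - log p - (log (1 - x) - log (1 - p))) x := by
  have hq : 0 < 1 - x := by linarith
  have e1 := (hasDerivAt_id x).mul ((hasDerivAt_log h0.ne').sub_const (log p))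
  have e2 := ((hasDerivAt_id x).const_sub 1).mul
    ((((hasDerivAt_id x).const_sub 1).log hq.ne').sub_const (log (1 - p)))
  refine (e1.add e2).congr_deriv ?_
  simp only [id]
  field_simp
  ring

/-- `v ^ (-2/3) * v₀ ^ (-1/3)` for the Bernoulli variances `v = p (1 - p)` and
`v₀ = x (1 - x)`. -/
noncomputable def varWeight (x p : ℝ) : ℝ :=
  exp (-(2 / 3) * log (p * (1 - p)) - 1 / 3 * log (x * (1 - x)))

theorem varWeight_pos (x p : ℝ) : 0 < varWeight x p := exp_pos _

theorem hasDerivAt_varWeight (x : ℝ) {p : ℝ} (h0 : 0 < p) (h1 : p < 1) :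
    HasDerivAt (fun p => varWeight x p)
      (-(2 / 3) * (1 - 2 * p) / (p * (1 - p)) * varWeight x p) p := by
  have hq : 0 < 1 - p := by linarith
  have e0 : HasDerivAt (fun p : ℝ => p * (1 - p)) (1 - 2 * p) p := by
    refine ((hasDerivAt_id p).mul ((hasDerivAt_id p).const_sub 1)).congr_deriv ?_
    simp only [id]; ring
  have e := (((e0.log (by positivity)).const_mul (-(2 / 3))).sub_const
    (1 / 3 * log (x * (1 - x)))).exp
  refine e.congr_deriv ?_
  unfold varWeight
  ring

/-- A quadratic approximation of the relative entropy with matching third derivative. -/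
noncomputable def klApprox (x p : ℝ) : ℝ := (p - x) ^ 2 / 2 * varWeight x p

/-- The ratio of the derivatives of `klApprox x` and of `bernoulliKL x`. -/
noncomputable def klSlope (x p : ℝ) : ℝ :=
  (p * (1 - p) - (p - x) * (1 - 2 * p) / 3) * varWeight x p

theorem hasDerivAt_klApprox (x : ℝ) {p : ℝ} (h0 : 0 < p) (h1 : p < 1) :
    HasDerivAt (fun p => klApprox x p) ((p - x) / (p * (1 - p)) * klSlope x p) p := by
  have hq : 0 < 1 - p := by linarith
  have e := ((((hasDerivAt_id p).sub_const x).pow 2).div_const 2).mul (hasDerivAt_varWeight x h0 h1)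
  refine e.congr_deriv ?_
  simp only [id, klSlope]
  field_simp
  simp
  ring

theorem hasDerivAt_klSlope (x : ℝ) {p : ℝ} (h0 : 0 < p) (h1 : p < 1) :
    HasDerivAt (fun p => klSlope x p)
      (2 / 9 * ((p - x) / (p * (1 - p))) * (1 - p * (1 - p)) * varWeight x p) p := by
  have hq : 0 < 1 - p := by linarith
  have e0 : HasDerivAt (fun p : ℝ => p * (1 - p) - (p - x) * (1 - 2 * p) / 3)
      (2 / 3 * (1 - 2 * p + (p - x))) p := by
    have a1 := (hasDerivAt_id p).mul ((hasDerivAt_id p).const_sub 1)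
    have a2 := (((hasDerivAt_id p).sub_const x).mul
      (((hasDerivAt_id p).const_mul 2).const_sub 1)).div_const 3
    refine (a1.sub a2).congr_deriv ?_
    simp only [id]; ring
  refine (e0.mul (hasDerivAt_varWeight x h0 h1)).congr_deriv ?_
  field_simp
  ring

theorem one_le_klSlope {x p : ℝ} (hx0 : 0 < x) (hx1 : x < 1) (h0 : 0 < p) (h1 : p < 1) :
    1 ≤ klSlope x p := by
  have hq : 0 < 1 - p := by linarith
  have hy : 0 < 1 - x := by linarith
  have hv : 0 < p * (1 - p) := by positivity
  have hv0 : 0 < x * (1 - x) := by positivity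
  set v := p * (1 - p) with hvd
  set v0 := x * (1 - x) with hv0d
  have hm : 0 < (2 * v + v0) / 3 := by positivity
  have l1 := log_le_sub_one_of_pos (div_pos hv hm)
  have l2 := log_le_sub_one_of_pos (div_pos hv0 hm)
  rw [log_div hv.ne' hm.ne'] at l1
  rw [log_div hv0.ne' hm.ne'] at l2
  have l3 : 2 / 3 * (v / ((2 * v + v0) / 3)) + 1 / 3 * (v0 / ((2 * v + v0) / 3)) = 1 := by
    field_simp
  have l4 : 0 ≤ log ((2 * v + v0) / 3) + (-(2 / 3) * log v - 1 / 3 * log v0) := by linarith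
  have l5 : 1 ≤ (2 * v + v0) / 3 * varWeight x p := by
    have := one_le_exp l4
    rwa [exp_add, exp_log hm] at this
  refine l5.trans (mul_le_mul_of_nonneg_right ?_ (varWeight_pos x p).le)
  rw [← hvd]
  nlinarith [sq_nonneg (p - x)]

theorem bernoulliKL_nonneg_of_le {x p : ℝ} (hx0 : 0 < x) (hxp : x ≤ p) (h1 : p < 1) :
    0 ≤ bernoulliKL x p := by
  rw [← bernoulliKL_self x]
  refine le_of_hasDerivAt_nonneg (f := fun t => bernoulliKL x t) hxp (fun t ht =>
    hasDerivAt_bernoulliKL_right x (hx0.trans_le ht.1) (ht.2.trans_lt h1)) (fun t ht => ?_)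
  have : 0 < t := hx0.trans_le ht.1
  have : 0 < 1 - t := by linarith [ht.2]
  have := sub_nonneg.2 ht.1
  positivity

theorem bernoulliKL_mono {x p s : ℝ} (hx0 : 0 < x) (hxp : x ≤ s) (hs : s ≤ p) (h1 : p < 1) :
    bernoulliKL x s ≤ bernoulliKL x p := by
  refine le_of_hasDerivAt_nonneg (f := fun t => bernoulliKL x t) hs (fun t ht =>
    hasDerivAt_bernoulliKL_right x (by linarith [ht.1]) (ht.2.trans_lt h1)) (fun t ht => ?_)
  have : 0 < t := by linarith [ht.1]
  have : 0 < 1 - t := by linarith [ht.2]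
  have : 0 ≤ t - x := by linarith [ht.1]
  positivity

theorem bernoulliKL_le_klApprox_of_le {x p : ℝ} (hx0 : 0 < x) (hxp : x ≤ p) (h1 : p < 1) :
    bernoulliKL x p ≤ klApprox x p := by
  have h := le_of_hasDerivAt_nonneg (f := fun t => klApprox x t - bernoulliKL x t) hxp
    (fun t ht => (hasDerivAt_klApprox x (hx0.trans_le ht.1) (ht.2.trans_lt h1)).sub
      (hasDerivAt_bernoulliKL_right x (hx0.trans_le ht.1) (ht.2.trans_lt h1))) (fun t ht => ?_)
  · simp only [bernoulliKL_self, klApprox, sub_self] at h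
    simp only [klApprox]
    linarith
  · have a1 : 0 < t := hx0.trans_le ht.1
    have a2 : 0 < 1 - t := by linarith [ht.2]
    have a3 : 0 ≤ t - x := sub_nonneg.2 ht.1
    have a4 := one_le_klSlope hx0 (hxp.trans_lt h1) a1 (by linarith)
    have a5 : 0 ≤ (t - x) / (t * (1 - t)) := by positivity
    nlinarith

theorem log_var_sub_log_var_le {x p : ℝ} (hx0 : 0 < x) (hx1 : x < 1) (h0 : 0 < p) (h1 : p < 1) :
    log (x * (1 - x)) - log (p * (1 - p)) ≤ bernoulliKL x p / (x * (1 - x)) + 1 := by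
  have hq : 0 < 1 - p := by linarith
  have hy : 0 < 1 - x := by linarith
  have l1 := log_le_sub_one_of_pos (div_pos h0 hx0)
  have l2 := log_le_sub_one_of_pos (div_pos hq hy)
  rw [log_div h0.ne' hx0.ne'] at l1
  rw [log_div hq.ne' hy.ne'] at l2
  rw [log_mul hx0.ne' hy.ne', log_mul h0.ne' hq.ne', ← sub_le_iff_le_add, le_div_iff₀ (by positivity)]
  have m1 := mul_le_mul_of_nonneg_left l1 (sq_nonneg x)
  have m2 := mul_le_mul_of_nonneg_left l2 (sq_nonneg (1 - x))
  have e1 : x ^ 2 * (p / x - 1) = x * p - x ^ 2 := by field_simp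
  have e2 : (1 - x) ^ 2 * ((1 - p) / (1 - x) - 1) = (1 - x) * (1 - p) - (1 - x) ^ 2 := by field_simp
  unfold bernoulliKL
  nlinarith [mul_pos hx0 h0, mul_pos hy hq]

theorem klApprox_le_of_le {x p : ℝ} (hx0 : 0 < x) (hxp : x ≤ p) (h1 : p < 1)
    (hL : bernoulliKL x p / (x * (1 - x)) ≤ 1 / 2) :
    klApprox x p ≤ bernoulliKL x p * (1 + 0.3025 * (bernoulliKL x p / (x * (1 - x)))) := by
  have hx1 : x < 1 := hxp.trans_lt h1
  have hy : 0 < 1 - x := by linarith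
  have hv0 : 0 < x * (1 - x) := by positivity
  have slope : ∀ t ∈ Icc x p, klSlope x t ≤ 1 + 0.605 * (bernoulliKL x t / (x * (1 - x))) := by
    intro s hs
    have h := le_of_hasDerivAt_nonneg
      (f := fun t => 0.605 * (bernoulliKL x t / (x * (1 - x))) - klSlope x t) hs.1
      (fun t ht => (((hasDerivAt_bernoulliKL_right x (hx0.trans_le ht.1)
        (by linarith [ht.2, hs.2])).div_const _).const_mul _).sub
        (hasDerivAt_klSlope x (hx0.trans_le ht.1) (by linarith [ht.2, hs.2]))) (fun t ht => ?_)
    · have e : klSlope x x = 1 := by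
        have : log (x * (1 - x)) + (-(2 / 3) * log (x * (1 - x)) - 1 / 3 * log (x * (1 - x))) = 0 := by
          ring
        have := congrArg exp this
        rw [exp_add, exp_log hv0, exp_zero] at this
        simpa [klSlope, varWeight] using this
      simp only [bernoulliKL_self, e, zero_div, mul_zero] at h
      linarith
    · have t0 : 0 < t := hx0.trans_le ht.1
      have t1 : t < 1 := by linarith [ht.2, hs.2]
      have t2 : 0 < 1 - t := by linarith
      have t3 : 0 ≤ t - x := sub_nonneg.2 ht.1
      have b1 := log_var_sub_log_var_le hx0 hx1 t0 t1
      have b2 : bernoulliKL x t / (x * (1 - x)) ≤ 1 / 2 := by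
        refine le_trans ?_ hL
        gcongr
        exact bernoulliKL_mono hx0 ht.1 (ht.2.trans hs.2) h1
      have b3 : x * (1 - x) * varWeight x t ≤ 2.7183 := by
        rw [varWeight]
        nth_rewrite 1 [← exp_log hv0]
        rw [← exp_add]
        refine le_trans (exp_le_exp.2 (show _ ≤ (1 : ℝ) by linarith)) (by linarith [exp_one_lt_d9])
      have b4 : 2 / 9 * (1 - t * (1 - t)) * varWeight x t ≤ 0.605 / (x * (1 - x)) := by
        rw [le_div_iff₀ hv0]
        have : 0 < t * (1 - t) * (x * (1 - x) * varWeight x t) := by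
          have := varWeight_pos x t
          positivity
        nlinarith
      have b5 : 0 ≤ (t - x) / (t * (1 - t)) := by positivity
      have := mul_le_mul_of_nonneg_left b4 b5
      have e : (t - x) / (t * (1 - t)) * (0.605 / (x * (1 - x))) =
        0.605 * ((t - x) / (t * (1 - t)) / (x * (1 - x))) := by ring
      linarith
  have h := le_of_hasDerivAt_nonneg
    (f := fun t => bernoulliKL x t + 0.3025 / (x * (1 - x)) * bernoulliKL x t ^ 2 - klApprox x t) hxp
    (fun t ht => ((hasDerivAt_bernoulliKL_right x (hx0.trans_le ht.1) (by linarith [ht.2])).add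
      (((hasDerivAt_bernoulliKL_right x (hx0.trans_le ht.1) (by linarith [ht.2])).pow 2).const_mul
        _)).sub (hasDerivAt_klApprox x (hx0.trans_le ht.1) (by linarith [ht.2]))) (fun t ht => ?_)
  · simp only [bernoulliKL_self, klApprox, sub_self] at h
    simp only [klApprox]
    have e : bernoulliKL x p * (1 + 0.3025 * (bernoulliKL x p / (x * (1 - x)))) =
      bernoulliKL x p + 0.3025 / (x * (1 - x)) * bernoulliKL x p ^ 2 := by ring
    rw [e]
    linarith
  · have t0 : 0 < t := hx0.trans_le ht.1
    have t2 : 0 < 1 - t := by linarith [ht.2]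
    have t3 : 0 ≤ t - x := sub_nonneg.2 ht.1
    have b5 : 0 ≤ (t - x) / (t * (1 - t)) := by positivity
    have := mul_le_mul_of_nonneg_left (slope t ht) b5
    simp only [Nat.cast_ofNat, Nat.add_one_sub_one, pow_one]
    have e : (t - x) / (t * (1 - t)) * (1 + 0.605 * (bernoulliKL x t / (x * (1 - x)))) =
      (t - x) / (t * (1 - t)) + 0.3025 / (x * (1 - x)) * (2 * bernoulliKL x t *
        ((t - x) / (t * (1 - t)))) := by ring
    linarith

theorem klApprox_one_sub (x p : ℝ) : klApprox (1 - x) (1 - p) = klApprox x p := by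
  simp only [klApprox, varWeight, sub_sub_cancel]
  rw [mul_comm (1 - p) p, mul_comm (1 - x) x]
  ring

theorem bernoulliKL_nonneg {x p : ℝ} (hx0 : 0 < x) (hx1 : x < 1) (h0 : 0 < p) (h1 : p < 1) :
    0 ≤ bernoulliKL x p := by
  rcases le_total x p with h | h
  · exact bernoulliKL_nonneg_of_le hx0 h h1
  · rw [← bernoulliKL_one_sub]
    exact bernoulliKL_nonneg_of_le (by linarith) (by linarith) (by linarith)

theorem bernoulliKL_le_klApprox {x p : ℝ} (hx0 : 0 < x) (hx1 : x < 1) (h0 : 0 < p) (h1 : p < 1) :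
    bernoulliKL x p ≤ klApprox x p := by
  rcases le_total x p with h | h
  · exact bernoulliKL_le_klApprox_of_le hx0 h h1
  · rw [← bernoulliKL_one_sub, ← klApprox_one_sub]
    exact bernoulliKL_le_klApprox_of_le (by linarith) (by linarith) (by linarith)

theorem klApprox_le {x p : ℝ} (hx0 : 0 < x) (hx1 : x < 1) (h0 : 0 < p) (h1 : p < 1)
    (hL : bernoulliKL x p / (x * (1 - x)) ≤ 1 / 2) :
    klApprox x p ≤ bernoulliKL x p * (1 + 0.3025 * (bernoulliKL x p / (x * (1 - x)))) := by
  rcases le_total x p with h | h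
  · exact klApprox_le_of_le hx0 h h1 hL
  · have := klApprox_le_of_le (x := 1 - x) (p := 1 - p) (by linarith) (by linarith) (by linarith)
    rw [bernoulliKL_one_sub, klApprox_one_sub, sub_sub_cancel, mul_comm (1 - x) x] at this
    exact this hL

theorem klApprox_pos {x p : ℝ} (h : p ≠ x) : 0 < klApprox x p := by
  have := varWeight_pos x p
  have := sub_ne_zero.2 h
  unfold klApprox
  positivity

/-- A lower bound for the ratio of the square roots, with a crude one away from `x`. -/
theorem one_sub_sqrt_kl_ratio_le {x p : ℝ} (hx0 : 0 < x) (hx1 : x < 1) (h0 : 0 < p) (h1 : p < 1)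
    (hne : p ≠ x) :
    1 - √(bernoulliKL x p / klApprox x p) ≤ 0.15125 * (bernoulliKL x p / (x * (1 - x)))
      + 8 * (bernoulliKL x p / (x * (1 - x))) ^ 3 := by
  have hK := bernoulliKL_nonneg hx0 hx1 h0 h1
  have hT := klApprox_pos hne
  have hv0 : 0 < x * (1 - x) := mul_pos hx0 (by linarith)
  set L := bernoulliKL x p / (x * (1 - x)) with hLd
  have hL0 : 0 ≤ L := by positivity
  rcases le_or_gt L (1 / 2) with hL | hL
  · have hT2 := klApprox_le hx0 hx1 h0 h1 hL
    have : 1 - 0.15125 * L ≤ √(bernoulliKL x p / klApprox x p) := by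
      refine le_sqrt_of_sq_le ?_
      rw [le_div_iff₀ hT]
      have h2 : (1 - 0.15125 * L) ^ 2 * (1 + 0.3025 * L) ≤ 1 := by nlinarith [mul_nonneg hL0 hL0]
      calc _ ≤ (1 - 0.15125 * L) ^ 2 * (bernoulliKL x p * (1 + 0.3025 * L)) := by gcongr
        _ = bernoulliKL x p * ((1 - 0.15125 * L) ^ 2 * (1 + 0.3025 * L)) := by ring
        _ ≤ bernoulliKL x p * 1 := by gcongr
        _ = _ := mul_one _
    have : 0 ≤ L ^ 3 := by positivity
    linarith
  · have := sqrt_nonneg (bernoulliKL x p / klApprox x p)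
    have : (1 / 2) ^ 3 ≤ L ^ 3 := by gcongr
    linarith

theorem bernoulliKL_pos {x p : ℝ} (hx0 : 0 < x) (hx1 : x < 1) (h0 : 0 < p) (h1 : p < 1)
    (hne : p ≠ x) : 0 < bernoulliKL x p := by
  have hq : 0 < 1 - p := by linarith
  have hy : 0 < 1 - x := by linarith
  have l1 := log_lt_sub_one_of_pos (div_pos h0 hx0) (by rwa [Ne, div_eq_one_iff_eq hx0.ne'])
  have l2 := log_le_sub_one_of_pos (div_pos hq hy)
  rw [log_div h0.ne' hx0.ne'] at l1
  rw [log_div hq.ne' hy.ne'] at l2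
  have m1 := mul_lt_mul_of_pos_left l1 hx0
  have m2 := mul_le_mul_of_nonneg_left l2 hy.le
  have e1 : x * (p / x - 1) = p - x := by field_simp
  have e2 : (1 - x) * ((1 - p) / (1 - x) - 1) = x - p := by field_simp; ring
  unfold bernoulliKL
  linarith

/-- The signed square root of the deviance `2 N K(x, p)`, increasing in `p`. -/
noncomputable def signedDeviance (N x p : ℝ) : ℝ :=
  if p < x then -√(2 * N * bernoulliKL x p) else √(2 * N * bernoulliKL x p)

theorem signedDeviance_of_le {N x p : ℝ} (h : x ≤ p) :
    signedDeviance N x p = √(2 * N * bernoulliKL x p) := if_neg h.not_gt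

theorem signedDeviance_of_lt {N x p : ℝ} (h : p < x) :
    signedDeviance N x p = -√(2 * N * bernoulliKL x p) := if_pos h

theorem abs_signedDeviance (N x p : ℝ) :
    |signedDeviance N x p| = √(2 * N * bernoulliKL x p) := by
  unfold signedDeviance; split_ifs <;> simp [abs_of_nonneg]

theorem signedDeviance_sq {N x p : ℝ} (hN : 0 < N) (hx0 : 0 < x) (hx1 : x < 1) (h0 : 0 < p)
    (h1 : p < 1) : signedDeviance N x p ^ 2 = 2 * N * bernoulliKL x p := by
  have := bernoulliKL_nonneg hx0 hx1 h0 h1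
  rw [← sq_abs, abs_signedDeviance, sq_sqrt (by positivity)]

theorem hasDerivAt_signedDeviance {N x p : ℝ} (hN : 0 < N) (hx0 : 0 < x) (hx1 : x < 1)
    (h0 : 0 < p) (h1 : p < 1) (hne : p ≠ x) :
    HasDerivAt (signedDeviance N x)
      (N * |p - x| / (p * (1 - p) * √(2 * N * bernoulliKL x p))) p := by
  have hq : 0 < 1 - p := by linarith
  have hK := bernoulliKL_pos hx0 hx1 h0 h1 hne
  have hs : 0 < √(2 * N * bernoulliKL x p) := by positivity
  have e := ((hasDerivAt_bernoulliKL_right x h0 h1).const_mul (2 * N)).sqrt (by positivity)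
  rcases hne.lt_or_gt with h | h
  · have : signedDeviance N x =ᶠ[𝓝 p] fun t => -√(2 * N * bernoulliKL x t) := by
      filter_upwards [eventually_lt_nhds h] with t ht using signedDeviance_of_lt ht
    refine (e.neg.congr_of_eventuallyEq this).congr_deriv ?_
    rw [abs_of_neg (by linarith)]
    field_simp
  · have : signedDeviance N x =ᶠ[𝓝 p] fun t => √(2 * N * bernoulliKL x t) := by
      filter_upwards [eventually_gt_nhds h] with t ht using signedDeviance_of_le ht.le
    refine (e.congr_of_eventuallyEq this).congr_deriv ?_
    rw [abs_of_pos (by linarith)]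
    field_simp

theorem continuousOn_signedDeviance {N x : ℝ} (hN : 0 < N) (hx0 : 0 < x) (hx1 : x < 1) :
    ContinuousOn (signedDeviance N x) (Ioo 0 1) := by
  intro p hp
  refine ContinuousAt.continuousWithinAt ?_
  by_cases hne : p = x
  · subst hne
    have hz : signedDeviance N p p = 0 := by simp [signedDeviance_of_le le_rfl, bernoulliKL_self]
    have hc : Tendsto (fun t => √(2 * N * bernoulliKL p t)) (𝓝 p)
        (𝓝 (√(2 * N * bernoulliKL p p))) :=
      (((hasDerivAt_bernoulliKL_right p hp.1 hp.2).continuousAt.const_mul (2 * N)).sqrt)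
    rw [bernoulliKL_self, mul_zero, sqrt_zero] at hc
    rw [ContinuousAt, hz, tendsto_zero_iff_abs_tendsto_zero]
    exact hc.congr fun t => (abs_signedDeviance N p t).symm
  · exact (hasDerivAt_signedDeviance hN hx0 hx1 hp.1 hp.2 hne).continuousAt

theorem tendsto_bernoulliKL_zero {x : ℝ} (hx0 : 0 < x) :
    Tendsto (fun p => bernoulliKL x p) (𝓝[>] 0) atTop := by
  have h1 : Tendsto (fun p => x * (log x - log p)) (𝓝[>] 0) atTop :=
    (tendsto_atTop_add_const_left _ _
      (tendsto_neg_atBot_atTop.comp tendsto_log_nhdsGT_zero)).const_mul_atTop hx0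
  have h2 : ContinuousAt (fun p => (1 - x) * (log (1 - x) - log (1 - p))) 0 := by
    have : ContinuousAt (fun p : ℝ => log (1 - p)) 0 := by
      refine ContinuousAt.log (by fun_prop) (by norm_num)
    fun_prop
  exact h1.atTop_add (h2.tendsto.mono_left nhdsWithin_le_nhds)

theorem tendsto_one_sub_nhdsLT : Tendsto (fun p : ℝ => 1 - p) (𝓝[<] 1) (𝓝[>] 0) := by
  refine tendsto_nhdsWithin_of_tendsto_nhds_of_eventually_within _ ?_ ?_
  · have : Tendsto (fun p : ℝ => 1 - p) (𝓝 1) (𝓝 (1 - 1)) := by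
      exact (continuous_const.sub continuous_id).tendsto _
    rw [sub_self] at this
    exact this.mono_left nhdsWithin_le_nhds
  · filter_upwards [self_mem_nhdsWithin] with p hp
    simpa using hp

theorem tendsto_signedDeviance_zero {N x : ℝ} (hN : 0 < N) (hx0 : 0 < x) :
    Tendsto (signedDeviance N x) (𝓝[>] 0) atBot := by
  have h := tendsto_neg_atTop_atBot.comp (tendsto_sqrt_atTop.comp
    ((tendsto_bernoulliKL_zero hx0).const_mul_atTop (by positivity : 0 < 2 * N)))
  refine h.congr' ?_
  filter_upwards [nhdsWithin_le_nhds (eventually_lt_nhds hx0)] with p hp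
  exact (signedDeviance_of_lt hp).symm

theorem tendsto_signedDeviance_one {N x : ℝ} (hN : 0 < N) (hx1 : x < 1) :
    Tendsto (signedDeviance N x) (𝓝[<] 1) atTop := by
  have h := (tendsto_sqrt_atTop.comp
    (((tendsto_bernoulliKL_zero (x := 1 - x) (by linarith)).comp
      tendsto_one_sub_nhdsLT).const_mul_atTop (by positivity : 0 < 2 * N)))
  refine h.congr' ?_
  filter_upwards [nhdsWithin_le_nhds (eventually_gt_nhds hx1)] with p hp
  simp only [Function.comp, bernoulliKL_one_sub]
  exact (signedDeviance_of_le hp.le).symm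

/-- The binomial probability of at most `k` successes. -/
noncomputable def binomLower (n k : ℕ) (p : ℝ) : ℝ :=
  ∑ i ∈ Finset.range (k + 1), (n.choose i : ℝ) * p ^ i * (1 - p) ^ (n - i)

theorem hasDerivAt_binomLower (k m : ℕ) (p : ℝ) :
    HasDerivAt (binomLower (k + 1 + m) k)
      (-((m + 1) * ((k + 1 + m).choose k : ℝ) * p ^ k * (1 - p) ^ m)) p := by
  have hq (j : ℕ) : HasDerivAt (fun p : ℝ => (1 - p) ^ j) (-(j * (1 - p) ^ (j - 1))) p := by
    refine (((hasDerivAt_id p).const_sub 1).pow j).congr_deriv ?_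
    simp
  induction k generalizing m with
  | zero =>
    have : binomLower (0 + 1 + m) 0 = fun p => (1 - p) ^ (m + 1) := by
      funext t; simp [binomLower, add_comm]
    rw [this]
    refine (hq (m + 1)).congr_deriv ?_
    simp
  | succ k ih =>
    have e1 := ih (m + 1)
    have e2 := ((hasDerivAt_pow (k + 1) p).const_mul
      ((k + 1 + (m + 1)).choose (k + 1) : ℝ)).mul (hq (m + 1))
    have hn : k + 1 + 1 + m = k + 1 + (m + 1) := by ring
    rw [hn]
    have hf : binomLower (k + 1 + (m + 1)) (k + 1) = fun p =>
        binomLower (k + 1 + (m + 1)) k p +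
          ((k + 1 + (m + 1)).choose (k + 1) : ℝ) * p ^ (k + 1) * (1 - p) ^ (m + 1) := by
      funext t
      rw [binomLower, Finset.sum_range_succ, show k + 1 + (m + 1) - (k + 1) = m + 1 by omega]
      rfl
    rw [hf]
    refine (e1.add e2).congr_deriv ?_
    have hc := Nat.choose_succ_right_eq (k + 1 + (m + 1)) k
    rw [show k + 1 + (m + 1) - k = m + 1 + 1 by omega] at hc
    have hc' : ((k + 1 + (m + 1)).choose (k + 1) : ℝ) * (k + 1) =
        ((k + 1 + (m + 1)).choose k : ℝ) * (m + 1 + 1) := by exact_mod_cast hc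
    simp only [Nat.add_sub_cancel]
    push_cast
    linear_combination (p ^ k * (1 - p) ^ (m + 1)) * hc'

theorem binomLower_zero (n k : ℕ) : binomLower n k 0 = 1 := by
  simp [binomLower, Finset.sum_range_succ']

theorem binomLower_one (k m : ℕ) : binomLower (k + 1 + m) k 1 = 0 := by
  refine Finset.sum_eq_zero fun i hi => ?_
  have : k + 1 + m - i ≠ 0 := by have := Finset.mem_range.1 hi; omega
  simp [this]

theorem antitoneOn_Ioo_of_hasDerivAt {f f' : ℝ → ℝ} {x : ℝ} (hx : x ∈ Ioo (0 : ℝ) 1)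
    (hc : ContinuousOn f (Ioo 0 1)) (hd : ∀ p ∈ Ioo (0 : ℝ) 1, p ≠ x → HasDerivAt f (f' p) p)
    (h0 : ∀ p ∈ Ioo (0 : ℝ) 1, p ≠ x → f' p ≤ 0) : AntitoneOn f (Ioo 0 1) := by
  have hu : Ioo (0 : ℝ) 1 = Ioc 0 x ∪ Ico x 1 := (Ioc_union_Ico_eq_Ioo hx.1 hx.2).symm
  rw [hu]
  have s1 : Ioc 0 x ⊆ Ioo (0 : ℝ) 1 := hu ▸ subset_union_left
  have s2 : Ico x 1 ⊆ Ioo (0 : ℝ) 1 := hu ▸ subset_union_right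
  refine AntitoneOn.union_right (c := x) ?_ ?_ (isGreatest_Ioc hx.1) (isLeast_Ico hx.2)
  · refine antitoneOn_of_deriv_nonpos (convex_Ioc 0 x) (hc.mono s1) ?_ ?_ <;>
    · rw [interior_Ioc]
      intro p hp
      have hp1 := s1 ⟨hp.1, hp.2.le⟩
      have := hd p hp1 hp.2.ne
      first
      | exact this.differentiableAt.differentiableWithinAt
      | rw [this.deriv]; exact h0 p hp1 hp.2.ne
  · refine antitoneOn_of_deriv_nonpos (convex_Ico x 1) (hc.mono s2) ?_ ?_ <;>
    · rw [interior_Ico]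
      intro p hp
      have hp1 := s2 ⟨hp.1.le, hp.2⟩
      have := hd p hp1 hp.1.ne'
      first
      | exact this.differentiableAt.differentiableWithinAt
      | rw [this.deriv]; exact h0 p hp1 hp.1.ne'

/-- The density of the image of the normal law under the inverse of the signed deviance. -/
noncomputable def devianceDensity (N x p : ℝ) : ℝ :=
  gaussDensity (signedDeviance N x p) * (N * |p - x| / (p * (1 - p) * √(2 * N * bernoulliKL x p)))

theorem devianceDensity_pos {N x p : ℝ} (hN : 0 < N) (hx0 : 0 < x) (hx1 : x < 1) (h0 : 0 < p)
    (h1 : p < 1) (hne : p ≠ x) : 0 < devianceDensity N x p := by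
  have := bernoulliKL_pos hx0 hx1 h0 h1 hne
  have := gaussDensity_pos (signedDeviance N x p)
  have : 0 < 1 - p := by linarith
  have := abs_pos.2 (sub_ne_zero.2 hne)
  unfold devianceDensity
  positivity

theorem hasDerivAt_binomLower_sub_Phi (k m : ℕ) {N x p : ℝ} (hN : 0 < N) (hx0 : 0 < x)
    (hx1 : x < 1) (h0 : 0 < p) (h1 : p < 1) (hne : p ≠ x) :
    HasDerivAt (fun p => binomLower (k + 1 + m) k p - (1 - Phi (signedDeviance N x p)))
      (devianceDensity N x p - (m + 1) * ((k + 1 + m).choose k : ℝ) * p ^ k * (1 - p) ^ m) p := by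
  refine ((hasDerivAt_binomLower k m p).sub (((hasDerivAt_Phi _).comp p
    (hasDerivAt_signedDeviance hN hx0 hx1 h0 h1 hne)).const_sub 1)).congr_deriv ?_
  unfold devianceDensity
  ring

theorem exists_density_ratio (k m : ℕ) {N x : ℝ} (hN : 0 < N) (hx0 : 0 < x) (hx1 : x < 1)
    (hk : N * x = k + 2 / 3) (hm : N * (1 - x) = m + 2 / 3) :
    ∃ C : ℝ, 0 < C ∧ ∀ p ∈ Ioo (0 : ℝ) 1, p ≠ x →
      (m + 1) * ((k + 1 + m).choose k : ℝ) * p ^ k * (1 - p) ^ m =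
        C * (devianceDensity N x p * √(bernoulliKL x p / klApprox x p)) := by
  set c : ℝ := (m + 1) * ((k + 1 + m).choose k : ℝ) with hc
  have hc0 : 0 < c := by
    have : 0 < (k + 1 + m).choose k := Nat.choose_pos (by omega)
    positivity
  set s0 : ℝ := -N * (x * log x + (1 - x) * log (1 - x)) + 1 / 6 * log (x * (1 - x)) with hs0
  refine ⟨c / ((√(2 * π))⁻¹ * √N * exp s0), by positivity, fun p ⟨h0, h1⟩ hne => ?_⟩
  have hq : 0 < 1 - p := by linarith
  have hK := bernoulliKL_pos hx0 hx1 h0 h1 hne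
  have hd := abs_pos.2 (sub_ne_zero.2 hne)
  have key : devianceDensity N x p * √(bernoulliKL x p / klApprox x p) =
      (√(2 * π))⁻¹ * √N * exp s0 * (p ^ k * (1 - p) ^ m) := by
    have hE : √(varWeight x p) = exp (-(1 / 3) * log (p * (1 - p)) - 1 / 6 * log (x * (1 - x))) := by
      rw [varWeight, sqrt_eq_iff_mul_self_eq (exp_pos _).le (exp_pos _).le, ← exp_add]
      congr 1; ring
    have hT : √(klApprox x p) = |p - x| / √2 * √(varWeight x p) := by
      rw [klApprox, sqrt_mul (by positivity), sqrt_div (sq_nonneg _), sqrt_sq_eq_abs]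
    have hf : exp s0 * (p ^ k * (1 - p) ^ m) = exp (-(N * bernoulliKL x p)) /
        (p * (1 - p) * √(varWeight x p)) := by
      rw [eq_div_iff (by rw [hE]; positivity), hE]
      have e1 : p ^ k = exp (k * log p) := by rw [mul_comm, exp_mul, exp_log h0, rpow_natCast]
      have e2 : (1 - p) ^ m = exp (m * log (1 - p)) := by
        rw [mul_comm, exp_mul, exp_log hq, rpow_natCast]
      have e3 : p * (1 - p) = exp (log (p * (1 - p))) := (exp_log (by positivity)).symm
      rw [e1, e2]
      nth_rewrite 1 [e3]
      simp only [← exp_add]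
      congr 1
      rw [hs0, log_mul h0.ne' hq.ne', bernoulliKL]
      linear_combination (-log p) * hk - log (1 - p) * hm
    rw [mul_assoc ((√(2 * π))⁻¹ * √N), hf, devianceDensity, gaussDensity,
      neg_div, signedDeviance_sq hN hx0 hx1 h0 h1, sqrt_div hK.le, hT, mul_assoc 2 N,
      mul_div_cancel_left₀ _ two_ne_zero, sqrt_mul zero_le_two (N * _), sqrt_mul hN.le]
    have : 0 < √(varWeight x p) := sqrt_pos.2 (varWeight_pos x p)
    have hNN : N = √N * √N := (mul_self_sqrt hN.le).symm
    have : 0 < √N := sqrt_pos.2 hN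
    have : 0 < √(bernoulliKL x p) := sqrt_pos.2 hK
    have h2 : (√2) ^ 2 = 2 := sq_sqrt zero_le_two
    generalize exp (-(N * bernoulliKL x p)) = E
    field_simp
    linear_combination E * hNN
  rw [key]
  field_simp

theorem one_le_density_ratio {k m : ℕ} {N x C : ℝ} (hN : 0 < N) (hx0 : 0 < x) (hx1 : x < 1)
    (hC0 : 0 < C) (hC : ∀ p ∈ Ioo (0 : ℝ) 1, p ≠ x →
      (m + 1) * ((k + 1 + m).choose k : ℝ) * p ^ k * (1 - p) ^ m =
        C * (devianceDensity N x p * √(bernoulliKL x p / klApprox x p))) : 1 ≤ C := by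
  by_contra! hlt
  set D : ℝ → ℝ := fun p => binomLower (k + 1 + m) k p - (1 - Phi (signedDeviance N x p)) with hD
  have hd : ∀ p ∈ Ioo (0 : ℝ) 1, p ≠ x → ∃ d > 0, HasDerivAt D d p := fun p hp hne => by
    refine ⟨_, ?_, hasDerivAt_binomLower_sub_Phi k m hN hx0 hx1 hp.1 hp.2 hne⟩
    rw [hC p hp hne]
    have h1 : √(bernoulliKL x p / klApprox x p) ≤ 1 := by
      rw [sqrt_le_one, div_le_one (klApprox_pos hne)]
      exact bernoulliKL_le_klApprox hx0 hx1 hp.1 hp.2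
    have h2 := devianceDensity_pos hN hx0 hx1 hp.1 hp.2 hne
    nlinarith [mul_pos hC0 h2]
  have hcA : Continuous (binomLower (k + 1 + m) k) :=
    continuous_iff_continuousAt.2 fun p => (hasDerivAt_binomLower k m p).continuousAt
  have hcP : Continuous Phi := continuous_iff_continuousAt.2 fun p => (hasDerivAt_Phi p).continuousAt
  have hcD : ContinuousOn D (Ioo 0 1) := hcA.continuousOn.sub
    (continuousOn_const.sub (hcP.comp_continuousOn (continuousOn_signedDeviance hN hx0 hx1)))
  have hanti : AntitoneOn (fun p => -D p) (Ioo 0 1) :=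
    antitoneOn_Ioo_of_hasDerivAt (f' := fun p => -deriv D p) ⟨hx0, hx1⟩ hcD.neg
      (fun p hp hne => by obtain ⟨d, -, h⟩ := hd p hp hne; rw [h.deriv]; exact h.neg)
      (fun p hp hne => by obtain ⟨d, h0, h⟩ := hd p hp hne; rw [h.deriv]; linarith)
  have t0 : Tendsto D (𝓝[>] 0) (𝓝 0) := by
    have := ((hcA.tendsto 0).mono_left nhdsWithin_le_nhds).sub
      ((tendsto_Phi_atBot.comp (tendsto_signedDeviance_zero hN hx0)).const_sub 1)
    rw [binomLower_zero] at this
    rwa [show (1 : ℝ) - (1 - 0) = 0 by ring] at this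
  have t1 : Tendsto D (𝓝[<] 1) (𝓝 0) := by
    have := ((hcA.tendsto 1).mono_left nhdsWithin_le_nhds).sub
      ((tendsto_Phi_atTop.comp (tendsto_signedDeviance_one hN hx1)).const_sub 1)
    rw [binomLower_one] at this
    rwa [show (0 : ℝ) - (1 - 1) = 0 by ring] at this
  have hz : ∀ p ∈ Ioo (0 : ℝ) 1, D p = 0 := fun p hp => by
    refine le_antisymm ?_ ?_
    · refine ge_of_tendsto t1 ?_
      filter_upwards [Ioo_mem_nhdsLT hp.2] with y hy
      exact neg_le_neg_iff.1 (hanti hp ⟨hp.1.trans hy.1, hy.2⟩ hy.1.le)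
    · refine le_of_tendsto t0 ?_
      filter_upwards [Ioo_mem_nhdsGT hp.1] with y hy
      exact neg_le_neg_iff.1 (hanti ⟨hy.1, hy.2.trans hp.2⟩ hp hy.2.le)
  have hp : x / 2 ∈ Ioo (0 : ℝ) 1 := ⟨by linarith, by linarith⟩
  obtain ⟨d, h0, h⟩ := hd _ hp (by linarith)
  have := h.unique ((hasDerivAt_const (x / 2) (0 : ℝ)).congr_of_eventuallyEq
    (eventuallyEq_of_mem (Ioo_mem_nhds hp.1 hp.2) hz))
  linarith

/-- A primitive of `(α w ^ 2 + β w ^ 6) * gaussDensity w`. -/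
noncomputable def momentPrimitive (α β w : ℝ) : ℝ :=
  α * (Phi w - w * gaussDensity w) +
    β * (15 * Phi w - (w ^ 5 + 5 * w ^ 3 + 15 * w) * gaussDensity w)

theorem hasDerivAt_momentPrimitive (α β w : ℝ) :
    HasDerivAt (momentPrimitive α β) ((α * w ^ 2 + β * w ^ 6) * gaussDensity w) w := by
  have hP := hasDerivAt_Phi w
  have hg := hasDerivAt_gaussDensity w
  have h5 : HasDerivAt (fun w : ℝ => w ^ 5 + 5 * w ^ 3 + 15 * w) (5 * w ^ 4 + 15 * w ^ 2 + 15) w := by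
    refine (((hasDerivAt_pow 5 w).add ((hasDerivAt_pow 3 w).const_mul 5)).add
      ((hasDerivAt_id w).const_mul 15)).congr_deriv ?_
    push_cast; ring
  refine (((hP.sub ((hasDerivAt_id w).mul hg)).const_mul α).add
    (((hP.const_mul 15).sub (h5.mul hg)).const_mul β)).congr_deriv ?_
  simp only [id]
  ring

theorem tendsto_momentPrimitive {l : Filter ℝ} {c : ℝ} (hl : l ≤ cocompact ℝ)
    (hP : Tendsto Phi l (𝓝 c)) (α β : ℝ) :
    Tendsto (momentPrimitive α β) l (𝓝 ((α + 15 * β) * c)) := by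
  have h1 := (tendsto_pow_mul_gaussDensity 1).mono_left hl
  have h3 := (tendsto_pow_mul_gaussDensity 3).mono_left hl
  have h5 := (tendsto_pow_mul_gaussDensity 5).mono_left hl
  have := ((hP.sub h1).const_mul α).add
    (((hP.const_mul 15).sub ((h5.add (h3.const_mul 5)).add (h1.const_mul 15))).const_mul β)
  convert this using 2
  · unfold momentPrimitive; ring
  · ring

theorem momentPrimitive_le {α β : ℝ} (hα : 0 ≤ α) (hβ : 0 ≤ β) (w : ℝ) :
    momentPrimitive α β w ≤ α + 15 * β := by
  have h := tendsto_momentPrimitive atTop_le_cocompact tendsto_Phi_atTop α β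
  rw [mul_one] at h
  refine ge_of_tendsto h ?_
  filter_upwards [eventually_ge_atTop w] with y hy
  refine le_of_hasDerivAt_nonneg hy (fun t _ => hasDerivAt_momentPrimitive α β t) (fun t _ => ?_)
  have := gaussDensity_pos t
  positivity

/-- Normal approximation of the binomial distribution function in terms of the deviance. -/
theorem binomLower_le_Phi_signedDeviance (k m : ℕ) {N x p : ℝ} (hN : 0 < N) (hx0 : 0 < x)
    (hx1 : x < 1) (hk : N * x = k + 2 / 3) (hm : N * (1 - x) = m + 2 / 3)
    (hp : p ∈ Ioo (0 : ℝ) 1) :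
    binomLower (k + 1 + m) k p ≤ Phi (-signedDeviance N x p) +
      (0.075625 / (N * (x * (1 - x))) + 15 / (N * (x * (1 - x))) ^ 3) := by
  obtain ⟨C, hC0, hC⟩ := exists_density_ratio k m hN hx0 hx1 hk hm
  have hC1 := one_le_density_ratio hN hx0 hx1 hC0 hC
  have hy : 0 < 1 - x := by linarith
  have hs : 0 < N * (x * (1 - x)) := by positivity
  set s := N * (x * (1 - x)) with hsd
  set α := 0.075625 / s with hα
  set β := 1 / s ^ 3 with hβ
  have hα0 : 0 ≤ α := by positivity
  have hβ0 : 0 ≤ β := by positivity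
  set D : ℝ → ℝ := fun p => binomLower (k + 1 + m) k p - (1 - Phi (signedDeviance N x p))
    - momentPrimitive α β (signedDeviance N x p) with hD
  have hcA : Continuous (binomLower (k + 1 + m) k) :=
    continuous_iff_continuousAt.2 fun p => (hasDerivAt_binomLower k m p).continuousAt
  have hcP : Continuous Phi := continuous_iff_continuousAt.2 fun p => (hasDerivAt_Phi p).continuousAt
  have hcJ : Continuous (momentPrimitive α β) :=
    continuous_iff_continuousAt.2 fun p => (hasDerivAt_momentPrimitive α β p).continuousAt
  have hcW := continuousOn_signedDeviance hN hx0 hx1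
  have hcD : ContinuousOn D (Ioo 0 1) := (hcA.continuousOn.sub
    (continuousOn_const.sub (hcP.comp_continuousOn hcW))).sub (hcJ.comp_continuousOn hcW)
  have hanti : AntitoneOn D (Ioo 0 1) := by
    refine antitoneOn_Ioo_of_hasDerivAt ⟨hx0, hx1⟩ hcD (fun p hp hne =>
      (hasDerivAt_binomLower_sub_Phi k m hN hx0 hx1 hp.1 hp.2 hne).sub
        ((hasDerivAt_momentPrimitive α β _).comp p
          (hasDerivAt_signedDeviance hN hx0 hx1 hp.1 hp.2 hne))) (fun p hp hne => ?_)
    rw [hC p hp hne, mul_assoc, ← devianceDensity]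
    have g0 := devianceDensity_pos hN hx0 hx1 hp.1 hp.2 hne
    have hr := one_sub_sqrt_kl_ratio_le hx0 hx1 hp.1 hp.2 hne
    have hW := signedDeviance_sq hN hx0 hx1 hp.1 hp.2
    have hW6 : signedDeviance N x p ^ 6 = (2 * N * bernoulliKL x p) ^ 3 := by rw [← hW]; ring
    have hmw : α * signedDeviance N x p ^ 2 + β * signedDeviance N x p ^ 6 =
        0.15125 * (bernoulliKL x p / (x * (1 - x))) + 8 * (bernoulliKL x p / (x * (1 - x))) ^ 3 := by
      rw [hW6, hW, hα, hβ, hsd]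
      field_simp
      ring
    rw [hmw]
    have := mul_le_mul_of_nonneg_left hr g0.le
    have h2 := mul_le_mul_of_nonneg_right hC1
      (mul_nonneg g0.le (sqrt_nonneg (bernoulliKL x p / klApprox x p)))
    linarith
  have t0 : Tendsto D (𝓝[>] 0) (𝓝 0) := by
    have hWt := tendsto_signedDeviance_zero hN hx0
    have := (((hcA.tendsto 0).mono_left nhdsWithin_le_nhds).sub
      ((tendsto_Phi_atBot.comp hWt).const_sub 1)).sub
      ((tendsto_momentPrimitive atBot_le_cocompact tendsto_Phi_atBot α β).comp hWt)
    rw [binomLower_zero] at this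
    rwa [show 1 - (1 - 0) - (α + 15 * β) * 0 = 0 by ring] at this
  have hz : D p ≤ 0 := by
    refine ge_of_tendsto t0 ?_
    filter_upwards [Ioo_mem_nhdsGT hp.1] with y hy
    exact hanti ⟨hy.1, hy.2.trans hp.2⟩ hp hy.2.le
  have hJ := momentPrimitive_le hα0 hβ0 (signedDeviance N x p)
  have e : 15 / s ^ 3 = 15 * β := by rw [hβ]; ring
  rw [Phi_neg, e]
  simp only [hD] at hz
  linarith

theorem hasDerivAt_log_odds (p : ℝ) {x : ℝ} (h0 : 0 < x) (h1 : x < 1) :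
    HasDerivAt (fun x => log x - log p - (log (1 - x) - log (1 - p))) (1 / (x * (1 - x))) x := by
  have hq : 0 < 1 - x := by linarith
  refine (((hasDerivAt_log h0.ne').sub_const _).sub
    ((((hasDerivAt_id x).const_sub 1).log hq.ne').sub_const _)).congr_deriv ?_
  simp only [id]
  field_simp
  ring

theorem hasDerivAt_cubic_quartic (a b c p x : ℝ) :
    HasDerivAt (fun x => a * (x - p) ^ 2 / 2 + b * (x - p) ^ 3 / 6 + c * (x - p) ^ 4 / 12)
      (a * (x - p) + b * (x - p) ^ 2 / 2 + c * (x - p) ^ 3 / 3) x := by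
  have h := (hasDerivAt_id x).sub_const p
  refine (((((h.pow 2).const_mul a).div_const 2).add (((h.pow 3).const_mul b).div_const 6)).add
    (((h.pow 4).const_mul c).div_const 12)).congr_deriv ?_
  simp only [id]
  push_cast
  ring

theorem hasDerivAt_quadratic_cubic (a b c p x : ℝ) :
    HasDerivAt (fun x => a * (x - p) + b * (x - p) ^ 2 / 2 + c * (x - p) ^ 3 / 3)
      (a + b * (x - p) + c * (x - p) ^ 2) x := by
  have h := (hasDerivAt_id x).sub_const p
  refine (((h.const_mul a).add (((h.pow 2).const_mul b).div_const 2)).add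
    (((h.pow 3).const_mul c).div_const 3)).congr_deriv ?_
  simp only [id]
  push_cast
  ring

theorem bernoulliKL_le_of_inv_le {a b c p x : ℝ} (hp0 : 0 < p) (hpx : p ≤ x) (hx1 : x < 1)
    (h : ∀ t ∈ Icc p x, 1 / (t * (1 - t)) ≤ a + b * (t - p) + c * (t - p) ^ 2) :
    bernoulliKL x p ≤ a * (x - p) ^ 2 / 2 + b * (x - p) ^ 3 / 6 + c * (x - p) ^ 4 / 12 := by
  have h1 : ∀ s ∈ Icc p x, log s - log p - (log (1 - s) - log (1 - p)) ≤
      a * (s - p) + b * (s - p) ^ 2 / 2 + c * (s - p) ^ 3 / 3 := fun s hs => by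
    have := le_of_hasDerivAt_nonneg hs.1 (fun t ht => (hasDerivAt_quadratic_cubic a b c p t).sub
      (hasDerivAt_log_odds p (hp0.trans_le ht.1) (by linarith [ht.2, hs.2])))
      (fun t ht => sub_nonneg.2 (h t ⟨ht.1, ht.2.trans hs.2⟩))
    simp at this
    linarith
  have := le_of_hasDerivAt_nonneg hpx (fun t ht => (hasDerivAt_cubic_quartic a b c p t).sub
    (hasDerivAt_bernoulliKL_left p (hp0.trans_le ht.1) (by linarith [ht.2])))
    (fun t ht => sub_nonneg.2 (h1 t ht))
  simp [bernoulliKL_self] at this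
  linarith

theorem le_bernoulliKL_of_le_inv {a b p x : ℝ} (hp0 : 0 < p) (hpx : p ≤ x) (hx1 : x < 1)
    (h : ∀ t ∈ Icc p x, a + b * (t - p) ≤ 1 / (t * (1 - t))) :
    a * (x - p) ^ 2 / 2 + b * (x - p) ^ 3 / 6 ≤ bernoulliKL x p := by
  have h1 : ∀ s ∈ Icc p x, a * (s - p) + b * (s - p) ^ 2 / 2 ≤
      log s - log p - (log (1 - s) - log (1 - p)) := fun s hs => by
    have := le_of_hasDerivAt_nonneg hs.1 (fun t ht =>
      (hasDerivAt_log_odds p (hp0.trans_le ht.1) (by linarith [ht.2, hs.2])).sub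
        (hasDerivAt_quadratic_cubic a b 0 p t))
      (fun t ht => sub_nonneg.2 (by simpa using h t ⟨ht.1, ht.2.trans hs.2⟩))
    simp at this
    linarith
  have := le_of_hasDerivAt_nonneg hpx (fun t ht =>
    (hasDerivAt_bernoulliKL_left p (hp0.trans_le ht.1) (by linarith [ht.2])).sub
      (hasDerivAt_cubic_quartic a b 0 p t))
    (fun t ht => sub_nonneg.2 (by simpa using h1 t ht))
  simp [bernoulliKL_self] at this
  linarith

theorem bernoulliKL_le_poly {p x h : ℝ} (hp0 : 0 < p) (hp1 : p < 1) (hpx : p ≤ x)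
    (hh0 : 0 ≤ h) (hh1 : 2 * p - 1 ≤ h) (hh2 : h + 0.34 * (p * (1 - p)) ≤ 1)
    (hx : x - p ≤ 0.34 * (p * (1 - p))) :
    bernoulliKL x p ≤ 1 / (p * (1 - p)) * (x - p) ^ 2 / 2 +
      1.52 * h / (p * (1 - p)) ^ 2 * (x - p) ^ 3 / 6 +
      1.52 / (p * (1 - p)) ^ 2 * (x - p) ^ 4 / 12 := by
  have hq : 0 < 1 - p := by linarith
  have hx1 : x < 1 := by nlinarith
  refine bernoulliKL_le_of_inv_le hp0 hpx hx1 fun t ht => ?_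
  obtain ⟨d, rfl⟩ : ∃ d, t = p + d := ⟨t - p, by ring⟩
  have hd0 : 0 ≤ d := by linarith [ht.1]
  have hv : 0 < p * (1 - p) := by positivity
  have hd1 : d ≤ 0.34 * (p * (1 - p)) := by linarith [ht.2]
  have hvt : p * (1 - p) - h * d - d ^ 2 ≤ (p + d) * (1 - (p + d)) := by nlinarith
  set v := p * (1 - p) with hvd
  have he : h * d + d ^ 2 ≤ 0.34 * v := by nlinarith
  have he0 : 0 ≤ h * d + d ^ 2 := by positivity
  have hpos : 0 < v - h * d - d ^ 2 := by linarith
  have e1 : 1 / v + 1.52 * h / v ^ 2 * (p + d - p) + 1.52 / v ^ 2 * (p + d - p) ^ 2 =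
      (v + 1.52 * (h * d + d ^ 2)) / v ^ 2 := by
    field_simp
    ring
  rw [e1]
  refine (one_div_le_one_div_of_le hpos hvt).trans ?_
  rw [div_le_div_iff₀ hpos (by positivity)]
  nlinarith [mul_nonneg he0 (sub_nonneg.2 he)]

theorem poly_le_bernoulliKL {p x h : ℝ} (hp0 : 0 < p) (hp1 : p < 1) (hpx : p ≤ x) (hx1 : x < 1)
    (hh0 : 0 ≤ h) (hh1 : 1 - 2 * p ≤ h) :
    1 / (p * (1 - p)) * (x - p) ^ 2 / 2 + -h / (p * (1 - p)) ^ 2 * (x - p) ^ 3 / 6 ≤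
      bernoulliKL x p := by
  have hq : 0 < 1 - p := by linarith
  refine le_bernoulliKL_of_le_inv hp0 hpx hx1 fun t ht => ?_
  obtain ⟨d, rfl⟩ : ∃ d, t = p + d := ⟨t - p, by ring⟩
  have hd0 : 0 ≤ d := by linarith [ht.1]
  have hv : 0 < p * (1 - p) := by positivity
  have hvt : (p + d) * (1 - (p + d)) ≤ p * (1 - p) + h * d := by nlinarith
  have hpos : 0 < (p + d) * (1 - (p + d)) := mul_pos (by linarith) (by linarith [ht.2])
  set v := p * (1 - p) with hvd
  have e1 : 1 / v + -h / v ^ 2 * (p + d - p) = (v - h * d) / v ^ 2 := by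
    field_simp
    ring
  rw [e1]
  refine le_trans ?_ (one_div_le_one_div_of_le hpos hvt)
  have : 0 ≤ h * d := by positivity
  rw [div_le_div_iff₀ (by positivity) (by positivity)]
  nlinarith

theorem sq_mul_gaussDensity_le (x : ℝ) : x ^ 2 * gaussDensity x ≤ gaussDensity 0 := by
  have h := quadratic_le_exp_of_nonneg (x := x ^ 2 / 2) (by positivity)
  have e : gaussDensity 0 = gaussDensity x * exp (x ^ 2 / 2) := by
    rw [gaussDensity, gaussDensity, mul_assoc, ← exp_add]; congr 2; ring
  rw [e, mul_comm]
  refine mul_le_mul_of_nonneg_left ?_ (gaussDensity_pos x).le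
  nlinarith [sq_nonneg (x ^ 2 / 2 - 1)]

theorem cube_mul_gaussDensity_le (x : ℝ) : x ^ 3 * gaussDensity x ≤ 2 * gaussDensity 0 := by
  have h := quadratic_le_exp_of_nonneg (x := x ^ 2 / 2) (by positivity)
  have e : gaussDensity 0 = gaussDensity x * exp (x ^ 2 / 2) := by
    rw [gaussDensity, gaussDensity, mul_assoc, ← exp_add]; congr 2; ring
  rw [e, mul_comm, mul_left_comm]
  refine mul_le_mul_of_nonneg_left ?_ (gaussDensity_pos x).le
  nlinarith [mul_nonneg (sq_nonneg x) (sq_nonneg (x - 2)), sq_nonneg x]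

theorem mul_gaussDensity_le (x : ℝ) : x * gaussDensity x ≤ gaussDensity 0 := by
  have h := add_one_le_exp (x ^ 2 / 2)
  have e : gaussDensity 0 = gaussDensity x * exp (x ^ 2 / 2) := by
    rw [gaussDensity, gaussDensity, mul_assoc, ← exp_add]; congr 2; ring
  rw [e, mul_comm]
  refine mul_le_mul_of_nonneg_left ?_ (gaussDensity_pos x).le
  nlinarith [sq_nonneg (x - 1)]

theorem gaussDensity_zero_le : gaussDensity 0 ≤ 0.4 := by
  have h : 2.5 ≤ √(2 * π) := le_sqrt_of_sq_le (by linarith [pi_gt_d2])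
  have : (√(2 * π))⁻¹ ≤ (2.5 : ℝ)⁻¹ := inv_anti₀ (by norm_num) h
  simp only [gaussDensity]
  norm_num at this ⊢
  linarith

theorem Phi_sub_Phi_le (x : ℝ) {c : ℝ} (hc : 0 ≤ c) : Phi (x + c) - Phi x ≤ gaussDensity 0 * c := by
  have := Phi_sub_le (x := x) (y := x + c) (by linarith) fun t _ => gaussDensity_le_zero t
  simpa using this

/-- The parameters of the normal approximation to the binomial law with parameters
`n = k + 1 + m` and `p`; `N = n + 1 / 3`, the modified frequency `x = (k + 2 / 3) / N` is in the
central region, `S ^ 2 = n p (1 - p)`, `R ^ 2 = N p (1 - p)`, and `h ≥ (2 p - 1)⁺`. -/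
structure CentralRegion (n N x p S R h d : ℝ) : Prop where
  p_pos : 0 < p
  p_lt : p < 1
  x_pos : 0 < x
  x_lt : x < 1
  S_ge : 10 ≤ S
  S_sq : S ^ 2 = n * (p * (1 - p))
  R_pos : 0 < R
  R_sq : R ^ 2 = N * (p * (1 - p))
  N_eq : N = n + 1 / 3
  h_nonneg : 0 ≤ h
  h_ge : 2 * p - 1 ≤ h
  h_le : h + 0.34 * (p * (1 - p)) ≤ 1
  d_eq : d = N * (x - p)
  d_le : |d| ≤ 0.34 * S ^ 2

namespace CentralRegion

variable {n N x p S R h d : ℝ}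

theorem var_pos (H : CentralRegion n N x p S R h d) : 0 < p * (1 - p) :=
  mul_pos H.p_pos (by linarith [H.p_lt])

theorem var_le (_H : CentralRegion n N x p S R h d) : p * (1 - p) ≤ 1 / 4 := by
  nlinarith [sq_nonneg (p - 1 / 2)]

theorem n_ge (H : CentralRegion n N x p S R h d) : 4 * S ^ 2 ≤ n := by
  have h1 := H.var_pos
  have h2 := H.var_le
  have h3 := H.S_sq
  have h4 := H.S_ge
  have : 0 < n := by
    by_contra! hn
    nlinarith
  nlinarith

theorem S_le_R (H : CentralRegion n N x p S R h d) : S ≤ R := by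
  have h1 := H.var_pos
  have h2 := H.R_pos
  have h3 := H.R_sq
  rw [H.N_eq] at h3
  by_contra! hlt
  nlinarith [H.S_sq]

theorem N_pos (H : CentralRegion n N x p S R h d) : 0 < N := by
  rw [H.N_eq]; nlinarith [H.n_ge, H.S_ge]

theorem sub_eq (H : CentralRegion n N x p S R h d) : x - p = d / N := by
  rw [H.d_eq, mul_div_cancel_left₀ _ H.N_pos.ne']

theorem abs_sub_le (H : CentralRegion n N x p S R h d) : |x - p| ≤ 0.34 * (p * (1 - p)) := by
  have hN := H.N_pos
  have hv := H.var_pos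
  rw [H.sub_eq, abs_div, abs_of_pos hN, div_le_iff₀ hN]
  refine H.d_le.trans ?_
  rw [H.S_sq, H.N_eq]
  nlinarith

theorem var_le_mul (H : CentralRegion n N x p S R h d) :
    0.66 * (p * (1 - p)) ≤ x * (1 - x) := by
  have hv := H.var_pos
  have hv4 := H.var_le
  obtain ⟨δ, hδ⟩ : ∃ δ, δ = x - p := ⟨_, rfl⟩
  have h1 := H.abs_sub_le
  rw [← hδ] at h1
  obtain ⟨h2, h3⟩ := abs_le.1 h1
  have e : x * (1 - x) = p * (1 - p) + δ * (1 - 2 * p) - δ ^ 2 := by rw [hδ]; ring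
  have h4 : (1 - 2 * p) ^ 2 ≤ (1 - 2 * (p * (1 - p))) ^ 2 := by nlinarith [sq_nonneg (p * (1 - p))]
  have h5 : |1 - 2 * p| ≤ 1 - 2 * (p * (1 - p)) := abs_le_of_sq_le_sq h4 (by linarith)
  have h6 : |δ * (1 - 2 * p)| ≤ 0.34 * (p * (1 - p)) * (1 - 2 * (p * (1 - p))) := by
    rw [abs_mul]
    exact mul_le_mul h1 h5 (abs_nonneg _) (by positivity)
  have h7 : δ ^ 2 ≤ (0.34 * (p * (1 - p))) ^ 2 := sq_le_sq' h2 h3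
  have h8 := (abs_le.1 h6).1
  rw [e]
  nlinarith

theorem error_le (H : CentralRegion n N x p S R h d) :
    0.075625 / (N * (x * (1 - x))) + 15 / (N * (x * (1 - x))) ^ 3 ≤ 0.12 / S ^ 2 := by
  have hN := H.N_pos
  have hS := H.S_ge
  have h1 : 0.66 * S ^ 2 ≤ N * (x * (1 - x)) := by
    have := mul_le_mul_of_nonneg_left H.var_le_mul hN.le
    have h2 := H.var_pos
    rw [H.S_sq]
    rw [H.N_eq] at this ⊢
    nlinarith
  have hS2 : 100 ≤ S ^ 2 := by nlinarith
  have h2 : 0.075625 / (N * (x * (1 - x))) ≤ 0.075625 / (0.66 * S ^ 2) := by gcongr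
  have h3 : 15 / (N * (x * (1 - x))) ^ 3 ≤ 15 / (0.66 * S ^ 2) ^ 3 := by gcongr
  refine (add_le_add h2 h3).trans ?_
  have hpos : 0 < S ^ 2 := by linarith
  generalize S ^ 2 = s at *
  rw [div_add_div _ _ (by positivity) (by positivity), div_le_div_iff₀ (by positivity) (by positivity)]
  have h4 : 0 ≤ s ^ 3 * (s ^ 2 - 100 ^ 2) :=
    mul_nonneg (by positivity) (by nlinarith)
  nlinarith [pow_pos hpos 2]

theorem Phi_sqrt_le (H : CentralRegion n N x p S R h d) (hd : 0 ≤ d) :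
    Phi √(2 * N * bernoulliKL x p) ≤
      Phi (d / S) + gaussDensity 0 * h / (3 * S) + 0.026 / S ^ 2 := by
  have hN := H.N_pos
  have hv := H.var_pos
  have hS : 0 < S := by linarith [H.S_ge]
  have hR := H.R_pos
  have hh := H.h_nonneg
  have hδ := H.sub_eq
  have hpx : p ≤ x := by rw [← sub_nonneg, hδ]; positivity
  have hkl := bernoulliKL_le_poly H.p_pos H.p_lt hpx hh H.h_ge H.h_le
    ((le_abs_self _).trans H.abs_sub_le)
  have hvR : p * (1 - p) = R ^ 2 / N := by rw [H.R_sq]; field_simp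
  rw [hδ, hvR] at hkl
  obtain ⟨z, rfl⟩ : ∃ z, d = z * R := ⟨d / R, by field_simp⟩
  have hz : 0 ≤ z := nonneg_of_mul_nonneg_left hd hR
  obtain ⟨τ, hτ⟩ : ∃ τ, τ = 1.52 * (h * z / (6 * R) + z ^ 2 / (12 * N)) := ⟨_, rfl⟩
  have hτ0 : 0 ≤ τ := by rw [hτ]; positivity
  have h1 : 2 * N * bernoulliKL x p ≤ z ^ 2 * (1 + 2 * τ) := by
    refine (mul_le_mul_of_nonneg_left hkl (by positivity)).trans_eq ?_
    rw [hτ]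
    field_simp
    ring
  have h2 : √(2 * N * bernoulliKL x p) ≤ z + z * τ := by
    refine sqrt_le_iff.2 ⟨by positivity, h1.trans ?_⟩
    nlinarith [mul_nonneg (sq_nonneg z) (sq_nonneg τ)]
  have h3 : Phi (z + z * τ) - Phi z ≤ gaussDensity z * (z + z * τ - z) :=
    Phi_sub_le (by nlinarith [mul_nonneg hz hτ0]) fun t ht => gaussDensity_le_of_abs_le
      (by rw [abs_of_nonneg hz, abs_of_nonneg (hz.trans ht.1)]; exact ht.1)
  have hSR := H.S_le_R
  have h4 : gaussDensity z * (z + z * τ - z) =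
      1.52 * (h / (6 * R) * (z ^ 2 * gaussDensity z) + z ^ 3 * gaussDensity z / (12 * N)) := by
    rw [hτ]; field_simp; ring
  have g0 := gaussDensity_pos 0
  have h5 : h / (6 * R) * (z ^ 2 * gaussDensity z) ≤ h / (6 * S) * gaussDensity 0 := by
    gcongr
    · exact mul_nonneg (sq_nonneg z) (gaussDensity_pos z).le
    · exact sq_mul_gaussDensity_le z
  have hNS : 4 * S ^ 2 ≤ N := by rw [H.N_eq]; linarith [H.n_ge]
  have h6 : z ^ 3 * gaussDensity z / (12 * N) ≤ 2 * 0.4 / (12 * (4 * S ^ 2)) := by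
    refine div_le_div₀ (by norm_num) ?_ (by positivity) (by linarith)
    linarith [cube_mul_gaussDensity_le z, gaussDensity_zero_le]
  have h7 : Phi z ≤ Phi (z * R / S) := Phi_mono (by
    rw [le_div_iff₀ hS]; exact mul_le_mul_of_nonneg_left hSR hz)
  have h8 : 2 * 0.4 / (12 * (4 * S ^ 2)) = (1 / 60) * (1 / S ^ 2) := by field_simp; norm_num
  have h9 : (0.026 : ℝ) / S ^ 2 = 0.026 * (1 / S ^ 2) := by ring
  have h10 : 0 < 1 / S ^ 2 := by positivity
  have h11 : h / (6 * S) * gaussDensity 0 = (gaussDensity 0 * h / (3 * S)) / 2 := by field_simp; ring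
  have h12 : 0 ≤ gaussDensity 0 * h / (3 * S) := by positivity
  have := Phi_mono h2
  rw [h8] at h6
  rw [h9]
  rw [h11] at h5
  linarith

theorem sub_le_sqrt_bernoulliKL (H : CentralRegion n N x p S R h d) (hh : 1 - 2 * (1 - p) ≤ h)
    (hd : d ≤ 0) :
    -d / R * (1 - 0.2 * (h * (-d / R) / R)) ≤ √(2 * N * bernoulliKL x p) ∧
      h * (-d / R) / R ≤ 0.34 := by
  have hN := H.N_pos
  have hv := H.var_pos
  have hS : 0 < S := by linarith [H.S_ge]
  have hR := H.R_pos
  have hh0 := H.h_nonneg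
  have hδ := H.sub_eq
  have hxp : x ≤ p := by rw [← sub_nonpos, hδ]; exact div_nonpos_of_nonpos_of_nonneg hd hN.le
  have hkl := poly_le_bernoulliKL (p := 1 - p) (x := 1 - x) (by linarith [H.p_lt])
    (by linarith [H.p_pos]) (by linarith) (by linarith [H.x_pos]) hh0 hh
  have hvR : (1 - p) * (1 - (1 - p)) = R ^ 2 / N := by rw [H.R_sq]; field_simp; ring
  rw [bernoulliKL_one_sub, show 1 - x - (1 - p) = -d / N by rw [neg_div, ← hδ]; ring, hvR] at hkl
  have hdle : -d ≤ 0.34 * R ^ 2 := by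
    have := (neg_le_abs d).trans H.d_le
    nlinarith [H.S_le_R]
  obtain ⟨z, hzd⟩ : ∃ z, -d = z * R := ⟨-d / R, by field_simp⟩
  rw [hzd] at hkl hdle ⊢
  have hz : 0 ≤ z := nonneg_of_mul_nonneg_left (by linarith : 0 ≤ z * R) hR
  rw [mul_div_cancel_right₀ _ hR.ne']
  have hzR : z ≤ 0.34 * R := by nlinarith
  have hh1 : h ≤ 1 := by linarith [H.h_le]
  obtain ⟨t, ht⟩ : ∃ t, t = h * z / R := ⟨_, rfl⟩
  have ht0 : 0 ≤ t := by rw [ht]; positivity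
  have ht1 : t ≤ 0.34 := by
    rw [ht, div_le_iff₀ hR]; nlinarith
  rw [← ht]
  refine ⟨le_sqrt_of_sq_le ?_, ht1⟩
  have h1 : z ^ 2 * (1 - t / 3) ≤ 2 * N * bernoulliKL x p := by
    refine le_trans (le_of_eq ?_) (mul_le_mul_of_nonneg_left hkl (by positivity))
    rw [ht]
    field_simp
    ring
  refine le_trans ?_ h1
  rw [mul_pow]
  refine mul_le_mul_of_nonneg_left ?_ (sq_nonneg z)
  nlinarith

theorem Phi_neg_sqrt_le (H : CentralRegion n N x p S R h d) (hd : d ≤ 0) :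
    Phi (-√(2 * N * bernoulliKL x p)) ≤
      Phi (d / S) + gaussDensity 0 * h / (3 * S) + 0.026 / S ^ 2 := by
  have hN := H.N_pos
  have hv := H.var_pos
  have hS : 0 < S := by linarith [H.S_ge]
  have hR := H.R_pos
  have hh := H.h_nonneg
  have hSR := H.S_le_R
  obtain ⟨h1, h2⟩ := H.sub_le_sqrt_bernoulliKL (by linarith [H.h_ge]) hd
  obtain ⟨z, hzd⟩ : ∃ z, -d = z * R := ⟨-d / R, by field_simp⟩
  have hz : 0 ≤ z := nonneg_of_mul_nonneg_left (by linarith : 0 ≤ z * R) hR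
  rw [hzd, mul_div_cancel_right₀ _ hR.ne'] at h1 h2
  obtain rfl : d = -(z * R) := by linarith
  obtain ⟨t, ht⟩ : ∃ t, t = h * z / R := ⟨_, rfl⟩
  have ht0 : 0 ≤ t := by rw [ht]; positivity
  rw [← ht] at h1 h2
  have g0 := gaussDensity_pos 0
  obtain ⟨u, hu⟩ : ∃ u, u = z * (1 - 0.2 * t) := ⟨_, rfl⟩
  have hu0 : 0.93 * z ≤ u := by rw [hu]; nlinarith
  have huz : u ≤ z := by rw [hu]; nlinarith
  rw [← hu] at h1
  have h3 : Phi (-u) - Phi (-z) ≤ gaussDensity u * (-u - -z) :=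
    Phi_sub_le (by linarith) fun t ht => gaussDensity_le_of_abs_le
      (by rw [abs_of_nonneg (by linarith), abs_of_nonpos (by linarith [ht.2])]; linarith [ht.2])
  have h4 : gaussDensity u * (-u - -z) ≤ gaussDensity 0 * h / (3 * S) := by
    have e : -u - -z = h * (0.2 * z ^ 2) / R := by rw [hu, ht]; ring
    have h5 : 0.2 * z ^ 2 ≤ u ^ 2 / 3 := by nlinarith
    calc gaussDensity u * (-u - -z) = h * (0.2 * z ^ 2) / R * gaussDensity u := by rw [e]; ring
      _ ≤ h * (u ^ 2 / 3) / S * gaussDensity u := by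
        have := (gaussDensity_pos u).le
        gcongr
      _ = h / (3 * S) * (u ^ 2 * gaussDensity u) := by field_simp
      _ ≤ h / (3 * S) * gaussDensity 0 := by
        gcongr
        exact sq_mul_gaussDensity_le u
      _ = _ := by ring
  have hRS : R ≤ S * (1 + 1 / (6 * n)) := by
    have hn : 0 < n := by nlinarith [H.n_ge]
    refine (le_abs_self _).trans (abs_le_of_sq_le_sq ?_ (by positivity))
    rw [H.R_sq, mul_pow, H.S_sq, H.N_eq]
    field_simp
    nlinarith
  have h6 : Phi (-z) - Phi (-(z * R / S)) ≤ gaussDensity z * (-z - -(z * R / S)) :=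
    Phi_sub_le (by
        rw [neg_le_neg_iff, le_div_iff₀ hS]
        exact mul_le_mul_of_nonneg_left hSR hz) fun t ht => gaussDensity_le_of_abs_le
      (by rw [abs_of_nonneg (by linarith), abs_of_nonpos (by linarith [ht.2])]; linarith [ht.2])
  have h7 : gaussDensity z * (-z - -(z * R / S)) ≤ 0.4 / (24 * S ^ 2) := by
    have h8 : R / S ≤ 1 + 1 / (24 * S ^ 2) := by
      rw [div_le_iff₀' hS]
      refine hRS.trans ?_
      gcongr S * (1 + 1 / ?_)
      linarith [H.n_ge]
    have := mul_gaussDensity_le z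
    calc gaussDensity z * (-z - -(z * R / S)) = z * gaussDensity z * (R / S - 1) := by
          field_simp; ring
      _ ≤ z * gaussDensity z * (1 / (24 * S ^ 2)) :=
        mul_le_mul_of_nonneg_left (by linarith) (mul_nonneg hz (gaussDensity_pos z).le)
      _ ≤ 0.4 * (1 / (24 * S ^ 2)) := by
        gcongr
        linarith [gaussDensity_zero_le]
      _ = _ := by ring
  have h8 : 0.4 / (24 * S ^ 2) = (1 / 60) * (1 / S ^ 2) := by field_simp; norm_num
  have h9 : (0.026 : ℝ) / S ^ 2 = 0.026 * (1 / S ^ 2) := by ring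
  have h10 : 0 < 1 / S ^ 2 := by positivity
  have h11 := Phi_mono (neg_le_neg h1)
  rw [h9, neg_div]
  rw [h8] at h7
  linarith

end CentralRegion

theorem CentralRegion.of_abs_sub_le {k m : ℕ} {p : ℝ} (hp : p ∈ Ioo (0 : ℝ) 1) {n : ℝ}
    (hn : n = k + 1 + m) (hS : 100 ≤ n * (p * (1 - p)))
    (hk : |k - n * p| ≤ n * (p * (1 - p)) / 3) :
    CentralRegion n (n + 1 / 3) ((k + 2 / 3) / (n + 1 / 3)) p √(n * (p * (1 - p)))
      √((n + 1 / 3) * (p * (1 - p))) (max 0 (2 * p - 1)) (k - n * p + (2 - p) / 3) := by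
  have hv : 0 < p * (1 - p) := mul_pos hp.1 (by linarith [hp.2])
  have hn0 : 0 < n := by rw [hn]; positivity
  have hm0 : (0 : ℝ) ≤ m := m.cast_nonneg
  refine ⟨hp.1, hp.2, by positivity, ?_, le_sqrt_of_sq_le (by linarith), sq_sqrt (by linarith),
    by positivity, sq_sqrt (by positivity), rfl, le_max_left _ _, le_max_right _ _, ?_, ?_, ?_⟩
  · rw [div_lt_one (by positivity)]
    linarith
  · rcases max_cases 0 (2 * p - 1) with ⟨h, -⟩ | ⟨h, -⟩ <;> rw [h]
    · nlinarith [sq_nonneg (p - 1 / 2)]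
    · nlinarith [hp.1, hp.2]
  · field_simp
    ring
  · rw [sq_sqrt (by linarith)]
    have := abs_le.1 hk
    rw [abs_le]
    constructor <;> linarith [hp.1, hp.2]

theorem binomLower_le_of_central {k m : ℕ} {p n x S R h d : ℝ} (hn : n = k + 1 + m)
    (hx : x = (k + 2 / 3) / (n + 1 / 3)) (H : CentralRegion n (n + 1 / 3) x p S R h d) :
    binomLower (k + 1 + m) k p ≤ Phi (-signedDeviance (n + 1 / 3) x p) + 0.12 / S ^ 2 := by
  have hN := H.N_pos
  have hk : (n + 1 / 3) * x = k + 2 / 3 := by rw [hx, mul_div_cancel₀ _ hN.ne']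
  refine (binomLower_le_Phi_signedDeviance k m hN H.x_pos H.x_lt hk ?_ ⟨H.p_pos, H.p_lt⟩).trans
    (add_le_add_right H.error_le _)
  rw [mul_sub, hk, hn]
  ring

theorem CentralRegion.Phi_signedDeviance_le {n N x p S R h d : ℝ}
    (H : CentralRegion n N x p S R h d) : Phi (-signedDeviance N x p) ≤
      Phi (d / S) + gaussDensity 0 * h / (3 * S) + 0.026 / S ^ 2 := by
  have hN := H.N_pos
  have hδ := H.sub_eq
  rcases lt_or_ge p x with hpx | hpx
  · rw [signedDeviance_of_lt hpx, neg_neg]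
    refine H.Phi_sqrt_le (le_of_lt ?_)
    by_contra! hd
    linarith [div_nonpos_of_nonpos_of_nonneg hd hN.le]
  · rw [signedDeviance_of_le hpx]
    refine H.Phi_neg_sqrt_le ?_
    by_contra! hd
    linarith [div_pos hd hN]

theorem gaussDensity_le_inv_mul {S x : ℝ} (hS : 10 ≤ S) (hx : 0.29 * S ≤ |x|) :
    gaussDensity x ≤ gaussDensity 0 / 2 / S := by
  have hx2 : (0.29 * S) ^ 2 ≤ x ^ 2 := by
    rw [← sq_abs x]
    gcongr
  obtain ⟨w, hw⟩ : ∃ w, w = 0.021 * S ^ 2 := ⟨_, rfl⟩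
  have h1 : 0.21 * S ≤ w := by rw [hw]; nlinarith
  have h2 := quadratic_le_exp_of_nonneg (x := w) (by linarith)
  have h3 : 2 * S ≤ exp (x ^ 2 / 2) := by
    calc 2 * S ≤ (2.05 * w + 1) ^ 2 := by nlinarith
      _ ≤ exp w ^ 2 := by
        have : 2.05 * w + 1 ≤ exp w := by nlinarith
        gcongr
        linarith
      _ = exp (2 * w) := by rw [← exp_nat_mul]; norm_num
      _ ≤ _ := exp_le_exp.2 (by rw [hw]; nlinarith)
  have e : gaussDensity 0 = gaussDensity x * exp (x ^ 2 / 2) := by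
    rw [gaussDensity, gaussDensity, mul_assoc, ← exp_add]; congr 2; ring
  rw [div_div, le_div_iff₀ (by linarith), e]
  exact mul_le_mul_of_nonneg_left h3 (gaussDensity_pos x).le

theorem CentralRegion.Phi_signedDeviance_le_of_le {n N x p S R h d : ℝ}
    (H : CentralRegion n N x p S R h d) (hd : d ≤ -0.316 * S ^ 2) :
    Phi (-signedDeviance N x p) ≤ gaussDensity 0 / 2 / S := by
  have hN := H.N_pos
  have hv := H.var_pos
  have hS := H.S_ge
  have hR := H.R_pos
  have hδ := H.sub_eq
  have hd0 : d ≤ 0 := by nlinarith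
  have hpx : x ≤ p := by
    linarith [div_nonpos_of_nonpos_of_nonneg hd0 hN.le]
  obtain ⟨h1, h2⟩ := H.sub_le_sqrt_bernoulliKL (by linarith [H.h_ge]) hd0
  have hRS : R ≤ 1.005 * S := by
    refine (le_abs_self _).trans (abs_le_of_sq_le_sq ?_ (by positivity))
    have hn : 400 ≤ n := by nlinarith [H.n_ge]
    rw [H.R_sq, mul_pow, H.S_sq, H.N_eq]
    nlinarith [mul_le_mul_of_nonneg_right hn hv.le]
  have h3 : 0.3144 * S ≤ -d / R := by
    rw [le_div_iff₀ hR]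
    nlinarith
  have h4 : 0.29 * S ≤ √(2 * N * bernoulliKL x p) := by
    refine le_trans ?_ h1
    generalize h * (-d / R) / R = t at h2
    nlinarith
  rw [signedDeviance_of_le hpx]
  refine (Phi_le_gaussDensity (by linarith)).trans (gaussDensity_le_inv_mul hS ?_)
  rwa [abs_neg, abs_of_nonneg (sqrt_nonneg _)]

theorem binomLower_mono (n : ℕ) {p : ℝ} (hp : p ∈ Icc (0 : ℝ) 1) :
    Monotone fun k => binomLower n k p := fun a b hab => by
  refine Finset.sum_le_sum_of_subset_of_nonneg
    (Finset.range_subset_range.2 (by lia)) fun i _ _ => ?_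
  have h0 := hp.1
  have h1 : 0 ≤ 1 - p := by linarith [hp.2]
  positivity

theorem binomLower_self (n : ℕ) (p : ℝ) : binomLower n n p = 1 := by
  have := add_pow p (1 - p) n
  rw [add_sub_cancel, one_pow] at this
  rw [this]
  exact Finset.sum_congr rfl fun i _ => by ring

theorem binomLower_le_one (n k : ℕ) {p : ℝ} (hp : p ∈ Icc (0 : ℝ) 1) : binomLower n k p ≤ 1 := by
  refine (binomLower_mono n hp (le_max_left k n)).trans_eq ?_
  rw [← binomLower_self n p]
  refine (Finset.sum_subset (Finset.range_subset_range.2 (by lia)) fun i _ hi => ?_).symm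
  rw [Nat.choose_eq_zero_of_lt (by rw [Finset.mem_range] at hi; lia)]
  simp

/-- The normal approximation of the binomial distribution function, from above. -/
theorem binomLower_le_Phi (n k : ℕ) {p : ℝ} (hp : p ∈ Ioo (0 : ℝ) 1)
    (hS : 100 ≤ n * (p * (1 - p))) :
    binomLower n k p ≤ Phi ((k - n * p) / √(n * (p * (1 - p)))) +
      gaussDensity 0 * ((1 + max p (1 - p)) / 3) / √(n * (p * (1 - p))) +
        0.1618 / (n * (p * (1 - p))) := by
  have hpI : p ∈ Icc (0 : ℝ) 1 := ⟨hp.1.le, hp.2.le⟩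
  have hS2 := sq_sqrt (show 0 ≤ n * (p * (1 - p)) by linarith)
  have hS10 : 10 ≤ √(n * (p * (1 - p))) := le_sqrt_of_sq_le (by linarith)
  have hS0 : 0 < √(n * (p * (1 - p))) := by linarith
  have hmax : max p (1 - p) = 1 - p + max 0 (2 * p - 1) := by
    rcases le_total p (1 - p) with h | h
    · rw [max_eq_right h, max_eq_left (by linarith)]; ring
    · rw [max_eq_left h, max_eq_right (by linarith)]; ring
  have hmax1 : 1 / 2 ≤ (1 + max p (1 - p)) / 3 := by
    rcases le_total p (1 - p) with h | h <;> simp only [h, max_eq_left, max_eq_right] <;> linarith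
  have g0 := gaussDensity_pos 0
  have hT : gaussDensity 0 / 2 / √(n * (p * (1 - p))) ≤
      gaussDensity 0 * ((1 + max p (1 - p)) / 3) / √(n * (p * (1 - p))) := by
    gcongr
    linarith [mul_le_mul_of_nonneg_left hmax1 g0.le]
  have hE0 : 0 < 1 / (n * (p * (1 - p))) := one_div_pos.2 (by linarith)
  have hE (c : ℝ) : c / (n * (p * (1 - p))) = c * (1 / (n * (p * (1 - p)))) := by ring
  have hnq : n * (p * (1 - p)) ≤ n * (1 - p) := by
    have := mul_nonneg (mul_nonneg n.cast_nonneg (sq_nonneg (1 - p))) zero_le_one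
    nlinarith
  have hnp : n * (p * (1 - p)) ≤ n * p := by
    have := mul_nonneg n.cast_nonneg (sq_nonneg p)
    nlinarith
  have central {j : ℕ} (hj : |j - n * p| ≤ n * (p * (1 - p)) / 3) :
      ∃ m : ℕ, n = j + 1 + m ∧ (n : ℝ) = j + 1 + m := by
    have h1 := (abs_le.1 hj).2
    have : (j : ℝ) < n := by linarith
    obtain ⟨m, hm⟩ := Nat.exists_eq_add_of_lt (Nat.cast_lt.1 this)
    refine ⟨m, by lia, ?_⟩
    rw [hm]
    push_cast
    ring
  rcases lt_or_ge (n * (p * (1 - p)) / 3) (k - n * p) with hk | hk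
  · have h1 : gaussDensity ((k - n * p) / √(n * (p * (1 - p)))) ≤
        gaussDensity 0 / 2 / √(n * (p * (1 - p))) := by
      refine gaussDensity_le_inv_mul hS10 (le_trans ?_ (le_abs_self _))
      rw [le_div_iff₀ hS0]
      nlinarith
    have h2 : Phi (-((k - n * p) / √(n * (p * (1 - p))))) ≤
        gaussDensity ((k - n * p) / √(n * (p * (1 - p)))) := by
      refine (Phi_le_gaussDensity ?_).trans (gaussDensity_le_of_abs_le (by rw [abs_neg]))
      rw [neg_le_neg_iff, le_div_iff₀ hS0]
      nlinarith
    rw [Phi_neg] at h2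
    rw [hE]
    linarith [binomLower_le_one n k hpI]
  rcases le_or_gt (-(n * (p * (1 - p)) / 3)) (k - n * p) with hk' | hk'
  · have hj := abs_le.2 ⟨hk', hk⟩
    obtain ⟨m, hnm, hn⟩ := central hj
    have H := CentralRegion.of_abs_sub_le hp hn hS hj
    have h1 := binomLower_le_of_central hn rfl H
    have h2 := H.Phi_signedDeviance_le
    rw [← hnm] at h1
    have h3 := Phi_sub_Phi_le ((k - n * p) / √(n * (p * (1 - p))))
      (c := (2 - p) / 3 / √(n * (p * (1 - p)))) (div_nonneg (by linarith [hp.2]) hS0.le)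
    rw [← add_div] at h3
    have h4 : gaussDensity 0 * ((1 + max p (1 - p)) / 3) / √(n * (p * (1 - p))) =
        gaussDensity 0 * ((2 - p) / 3 / √(n * (p * (1 - p)))) +
          gaussDensity 0 * max 0 (2 * p - 1) / (3 * √(n * (p * (1 - p)))) := by
      rw [hmax]
      field_simp
      ring
    rw [hS2, hE] at h1 h2
    rw [h4, hE]
    linarith
  · obtain ⟨j, hj⟩ : ∃ j, j = ⌈n * p - n * (p * (1 - p)) / 3⌉₊ := ⟨_, rfl⟩
    have hj1 := Nat.le_ceil (n * p - n * (p * (1 - p)) / 3)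
    have hj2 := Nat.ceil_lt_add_one (a := n * p - n * (p * (1 - p)) / 3) (by linarith)
    rw [← hj] at hj1 hj2
    have hkj : k ≤ j := by
      have : (k : ℝ) ≤ j := by linarith
      exact_mod_cast this
    have hjc : |j - n * p| ≤ n * (p * (1 - p)) / 3 := abs_le.2 ⟨by linarith, by linarith⟩
    obtain ⟨m, hnm, hn⟩ := central hjc
    have H := CentralRegion.of_abs_sub_le hp hn hS hjc
    have h1 := binomLower_le_of_central hn rfl H
    have h2 := H.Phi_signedDeviance_le_of_le (by rw [hS2]; linarith [hp.1])
    rw [← hnm, hS2, hE] at h1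
    have h3 := binomLower_mono n hpI hkj
    have h4 := Phi_nonneg ((k - n * p) / √(n * (p * (1 - p))))
    simp only at h3
    rw [hE]
    linarith

theorem sum_le_Phi (n : ℕ) (X : ℝ) {p : ℝ} (hp : p ∈ Ioo (0 : ℝ) 1)
    (hS : 100 ≤ n * (p * (1 - p))) :
    (∑ i ∈ Finset.range (n + 1),
      if (i : ℝ) ≤ X then (n.choose i : ℝ) * p ^ i * (1 - p) ^ (n - i) else 0) ≤
      Phi ((X - n * p) / √(n * (p * (1 - p)))) +
        gaussDensity 0 * ((1 + max p (1 - p)) / 3) / √(n * (p * (1 - p))) +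
          0.1618 / (n * (p * (1 - p))) := by
  have hp0 := hp.1
  have hq0 : 0 < 1 - p := by linarith [hp.2]
  rcases lt_or_ge X 0 with hX | hX
  · rw [Finset.sum_eq_zero fun i _ => if_neg (by linarith [i.cast_nonneg (α := ℝ)])]
    have := Phi_nonneg ((X - n * p) / √(n * (p * (1 - p))))
    have := gaussDensity_pos 0
    have : 0 < max p (1 - p) := lt_max_of_lt_left hp0
    positivity
  · have hk := Nat.floor_le hX
    refine le_trans ?_ ((binomLower_le_Phi n ⌊X⌋₊ hp hS).trans ?_)
    · rw [← Finset.sum_filter]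
      refine Finset.sum_le_sum_of_subset_of_nonneg (fun i hi => ?_) fun i _ _ => by positivity
      rw [Finset.mem_range, Nat.lt_add_one_iff]
      exact Nat.le_floor (Finset.mem_filter.1 hi).2
    · gcongr
      exact Phi_mono (by gcongr)

theorem one_sub_binomCDF (n : ℕ) (p X : ℝ) :
    1 - binomCDF n p X = ∑ i ∈ Finset.range (n + 1),
      if (i : ℝ) ≤ n - X then (n.choose i : ℝ) * (1 - p) ^ i * (1 - (1 - p)) ^ (n - i) else 0 := by
  rw [show 1 - binomCDF n p X = binomLower n n p - binomCDF n p X by rw [binomLower_self],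
    binomLower, binomCDF, ← Finset.sum_sub_distrib, ← Finset.sum_range_reflect]
  refine Finset.sum_congr rfl fun i hi => ?_
  have hi : i ≤ n := by simpa [Nat.lt_add_one_iff] using hi
  have e1 : n + 1 - 1 - i = n - i := by lia
  have e2 : n - (n - i) = i := by lia
  rw [e1, e2, Nat.choose_symm hi, Nat.cast_sub hi]
  by_cases h : (n : ℝ) - i < X
  · rw [if_pos h, if_neg (by linarith), sub_self]
  · rw [if_neg h, if_pos (by linarith)]
    ring

theorem abs_binomCDF_sub_Phi_le (n : ℕ) (X : ℝ) {p : ℝ} (hp : p ∈ Ioo (0 : ℝ) 1)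
    (hS : 100 ≤ n * (p * (1 - p))) :
    |binomCDF n p X - Phi ((X - n * p) / √(n * (p * (1 - p))))| ≤
      gaussDensity 0 * ((1 + max p (1 - p)) / 3) / √(n * (p * (1 - p))) +
        0.1618 / (n * (p * (1 - p))) := by
  have hp0 := hp.1
  have hq0 : 0 < 1 - p := by linarith [hp.2]
  rw [abs_le]
  constructor
  · have e : (1 - p) * (1 - (1 - p)) = p * (1 - p) := by ring
    have := sum_le_Phi n (n - X) (p := 1 - p) ⟨hq0, by linarith⟩ (by rwa [e])
    rw [← one_sub_binomCDF, e, sub_sub_cancel, max_comm,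
      show (n - X - n * (1 - p)) / √(n * (p * (1 - p))) =
        -((X - n * p) / √(n * (p * (1 - p)))) by ring, Phi_neg] at this
    linarith
  · have := sum_le_Phi n X hp hS
    have h2 : binomCDF n p X ≤ ∑ i ∈ Finset.range (n + 1),
        if (i : ℝ) ≤ X then (n.choose i : ℝ) * p ^ i * (1 - p) ^ (n - i) else 0 := by
      refine Finset.sum_le_sum fun i _ => ?_
      split_ifs with h1 h2
      · rfl
      · exact absurd h1.le h2
      · positivity
      · rfl
    linarith

end

/-- For `0 < p ≤ 0.5`, `q = 1 − p`, and `n` with `σ² = npq ≥ 100`: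
`Δ_n(p) ≤ ℰ₁(p)/σ + 0.1618/σ²`, where `ℰ₁(p) = (2 − p)/(3√(2π))`. -/
theorem Delta_le_Neammanee (p : ℝ) (hp0 : 0 < p) (hp1 : p ≤ 0.5)
    (n : ℕ) (hσ : 100 ≤ n * p * (1 - p)) :
    Delta n p ≤
      ((2 - p) / (3 * Real.sqrt (2 * Real.pi))) / Real.sqrt (n * p * (1 - p)) +
        0.1618 / (n * p * (1 - p)) := by
  refine ciSup_le fun X => ?_
  rw [mul_assoc] at hσ ⊢
  have h := abs_binomCDF_sub_Phi_le n X (p := p) ⟨hp0, by linarith⟩ hσ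
  have hg : gaussDensity 0 = (Real.sqrt (2 * Real.pi))⁻¹ := by simp [gaussDensity]
  rw [max_eq_right (by linarith), hg] at h
  refine h.trans_eq ?_
  congr 2
  rw [inv_mul_eq_div, div_div]
  congr 1
  ring
end
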